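/- Let T > 0, let φ ∈ H^{12}(𝕋) be real-valued, and let u₁, u₂ ∈ C([0,T]; L²(𝕋)) ∩ L^∞([0,T]; H^{12}(𝕋)) be real-valued solutions (in the sense of distributions) of ∂_t u + γ₀∂_x⁵u + γ₁∂_x³u + γ₂∂_x u = N(∂_x³u,∂_x²u,∂_xu,u) on [0,T]×𝕋 with u₁(0,·) = u₂(0,·) = φ. Assume in addition that P_N(u₁(t)) ≥ 0 for all t ∈ [0,T]. Then u₁(t) = u₂(t) for all t ∈ [0,T]. -/

import Mathlib

/- Fifth order dispersive equations on the torus: uniqueness for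
   parabolic resonance type on [0,T] assuming P_N(u₁(t)) ≥ 0. -/

namespace FifthOrderStmt3

/-- Fourier coefficient of a `2π`-periodic function `f : ℝ → ℝ`:
`f̂(k) = (1/2π) ∫_0^{2π} f(x) e^{-ikx} dx`. -/
noncomputable def fc (f : ℝ → ℝ) (k : ℤ) : ℂ :=
  (Complex.ofReal (2 * Real.pi))⁻¹ *
    ∫ x in (0:ℝ)..(2 * Real.pi), (f x : ℂ) * Complex.exp (-Complex.I * (k : ℂ) * (x : ℂ))

/-- Sobolev norm `‖f‖_{H^s} = (Σ_k (1+k²)^s |f̂(k)|²)^{1/2}`. -/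
noncomputable def hsNorm (s : ℕ) (f : ℝ → ℝ) : ℝ :=
  Real.sqrt (∑' k : ℤ, (1 + (k : ℝ) ^ 2) ^ s * ‖fc f k‖ ^ 2)

/-- `f` belongs to `H^s(𝕋)` (continuous representative, `2π`-periodic, finite `H^s` norm). -/
def MemHs (s : ℕ) (f : ℝ → ℝ) : Prop :=
  Continuous f ∧ Function.Periodic f (2 * Real.pi) ∧
    Summable (fun k : ℤ => (1 + (k : ℝ) ^ 2) ^ s * ‖fc f k‖ ^ 2)

/-- The nonlinearity `N(∂_x³f, ∂_x²f, ∂_xf, f) = Σ_j λ_j (∂_x³f)^{a_j}(∂_x²f)^{b_j}(∂_xf)^{c_j}f^{d_j}`. -/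
noncomputable def Nfun (j0 : ℕ) (lam : Fin j0 → ℝ) (a b c d : Fin j0 → ℕ)
    (f : ℝ → ℝ) (x : ℝ) : ℝ :=
  ∑ j : Fin j0, lam j * (iteratedDeriv 3 f x) ^ (a j) * (iteratedDeriv 2 f x) ^ (b j) *
    (deriv f x) ^ (c j) * (f x) ^ (d j)

/-- The functional `P_N(f) = Σ_j (λ_j b_j / 2π) ∫_𝕋 (∂_x³f)^{a_j}(∂_x²f)^{b_j-1}(∂_xf)^{c_j}f^{d_j} dx`. -/
noncomputable def PN (j0 : ℕ) (lam : Fin j0 → ℝ) (a b c d : Fin j0 → ℕ) (f : ℝ → ℝ) : ℝ :=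
  ∑ j : Fin j0, (lam j * (b j : ℝ) / (2 * Real.pi)) *
    ∫ x in (0:ℝ)..(2 * Real.pi),
      (iteratedDeriv 3 f x) ^ (a j) * (iteratedDeriv 2 f x) ^ (b j - 1) *
        (deriv f x) ^ (c j) * (f x) ^ (d j)

/-- `u` is a (distributional) solution of
`∂_t u + γ₀∂_x⁵u + γ₁∂_x³u + γ₂∂_x u = N(∂_x³u,∂_x²u,∂_xu,u)` on `[T₁,T₂] × 𝕋`:
each `u(t)` is `2π`-periodic and `C³` in `x` (so that `N(u)` is defined pointwise), and for every
smooth test function `ψ`, `2π`-periodic in `x` and compactly supported in time inside `(T₁,T₂)`,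
the integrated-by-parts identity holds. -/
def IsSolution (γ0 γ1 γ2 : ℝ) (j0 : ℕ) (lam : Fin j0 → ℝ) (a b c d : Fin j0 → ℕ)
    (T1 T2 : ℝ) (u : ℝ → ℝ → ℝ) : Prop :=
  (∀ t ∈ Set.Icc T1 T2, ContDiff ℝ 3 (u t) ∧ Function.Periodic (u t) (2 * Real.pi)) ∧
  ∀ ψ : ℝ → ℝ → ℝ, ContDiff ℝ (⊤ : ℕ∞) (Function.uncurry ψ) →
    (∀ t : ℝ, Function.Periodic (ψ t) (2 * Real.pi)) →
    (∀ t : ℝ, t ∉ Set.Ioo T1 T2 → ∀ x : ℝ, ψ t x = 0) →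
    (∫ t in T1..T2, ∫ x in (0:ℝ)..(2 * Real.pi),
      (u t x * (deriv (fun τ : ℝ => ψ τ x) t
        + γ0 * iteratedDeriv 5 (ψ t) x
        + γ1 * iteratedDeriv 3 (ψ t) x
        + γ2 * deriv (ψ t) x)
      + Nfun j0 lam a b c d (u t) x * ψ t x)) = 0

/-- `t ↦ u(t)` is continuous from `A` into `H^s(𝕋)`. -/
def ContInHs (s : ℕ) (A : Set ℝ) (u : ℝ → ℝ → ℝ) : Prop :=
  ∀ t₀ ∈ A, ∀ ε > 0, ∃ δ > 0, ∀ t ∈ A, |t - t₀| < δ →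
    hsNorm s (fun x => u t x - u t₀ x) < ε

/-! The difference `w = u₁ - u₂` solves `∂_t w + γ₀∂ₓ⁵w = A ∂ₓ³w + B ∂ₓ²w + C ∂ₓw + D w` up to an
error quadratic in `(w, …, ∂ₓ³w)`, the coefficients being the derivatives of `N` along `u₁` (minus
`γ₁`, `γ₂`). In the balance of `∫ (∂ₓw)²` the only terms that `∫ w² + (∂ₓw)²` does not control are
`∫ (∂ₓA - 2B) (∂ₓ²w)²` and the quadratic error. Adding `∫ H w²` to the energy contributes
`5γ₀ ∫ ∂ₓH (∂ₓ²w)²` through `γ₀∂ₓ⁵w`, so a suitable periodic `H` replaces `∂ₓA - 2B` by its mean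
over a period, which is `-2 P_N(u₁) ≤ 0`. The error is harmless because interpolation between the
energy and the bound in `H^s` gives `|∂ₓⁱw|³ ≲ ∫ w² + (∂ₓw)²` for `i ≤ 3`. Grönwall's inequality then
yields `w = 0`. -/

section

open Asymptotics Function MeasureTheory Real Set
open scoped Filter

local notation:max "∂[" i "]" => iteratedDeriv i

/-! ### Time-dependent periodic functions with continuous space derivatives -/

lemma periodic_deriv {f : ℝ → ℝ} {p : ℝ} (hf : Periodic f p) : Periodic (deriv f) p := fun x => by
  rw [← deriv_comp_add_const, funext hf]

lemma periodic_iteratedDeriv {f : ℝ → ℝ} {p : ℝ} (hf : Periodic f p) (n : ℕ) :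
    Periodic (∂[n] f) p := by
  induction n with
  | zero => simpa only [iteratedDeriv_zero] using hf
  | succ n ih => simpa only [iteratedDeriv_succ] using periodic_deriv ih

lemma hasDerivAt_iteratedDeriv {f : ℝ → ℝ} {n i : ℕ} (hf : ContDiff ℝ n f) (hi : i < n) (x : ℝ) :
    HasDerivAt (∂[i] f) (∂[i + 1] f x) x := by
  rw [iteratedDeriv_succ]
  exact (hf.differentiable_iteratedDeriv i (mod_cast hi) x).hasDerivAt

/-- `f t x` is `2π`-periodic and `n` times continuously differentiable in `x`, all these space
derivatives being jointly continuous in `(t, x)`. -/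
structure SpaceC (n : ℕ) (f : ℝ → ℝ → ℝ) : Prop where
  contDiff (t : ℝ) : ContDiff ℝ n (f t)
  continuous_iteratedDeriv {i : ℕ} (hi : i ≤ n) : Continuous (uncurry fun t => ∂[i] (f t))
  periodic (t : ℝ) : Periodic (f t) (2 * π)

namespace SpaceC

variable {n : ℕ} {f g : ℝ → ℝ → ℝ}

lemma mono {m : ℕ} (hf : SpaceC n f) (h : m ≤ n) : SpaceC m f where
  contDiff t := (hf.contDiff t).of_le (mod_cast h)
  continuous_iteratedDeriv hi := hf.continuous_iteratedDeriv (hi.trans h)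
  periodic := hf.periodic

lemma continuous (hf : SpaceC n f) : Continuous (uncurry f) := by
  simpa only [iteratedDeriv_zero] using hf.continuous_iteratedDeriv n.zero_le

lemma hasDerivAt_iteratedDeriv (hf : SpaceC n f) {i : ℕ} (hi : i < n) (t x : ℝ) :
    HasDerivAt (∂[i] (f t)) (∂[i + 1] (f t) x) x :=
  FifthOrderStmt3.hasDerivAt_iteratedDeriv (hf.contDiff t) hi x

lemma iteratedDeriv {i j : ℕ} (hf : SpaceC n f) (h : i + j ≤ n) :
    SpaceC j fun t => ∂[i] (f t) where
  contDiff t := by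
    rw [iteratedDeriv_eq_iterate]
    exact ((hf.contDiff t).of_le (by exact_mod_cast (add_comm j i).trans_le h)).iterate_deriv' j i
  continuous_iteratedDeriv hk := by
    simp only [iteratedDeriv_eq_iterate, ← iterate_add_apply]
    simpa only [iteratedDeriv_eq_iterate] using hf.continuous_iteratedDeriv (by omega)
  periodic t := periodic_iteratedDeriv (hf.periodic t) i

lemma of_hasDerivAt (hf : Continuous (uncurry f)) (hp : ∀ t, Periodic (f t) (2 * π))
    (hg : SpaceC n g) (h : ∀ t x, HasDerivAt (f t) (g t x) x) : SpaceC (n + 1) f := by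
  have hd : ∀ t, deriv (f t) = g t := fun t => funext fun x => (h t x).deriv
  refine ⟨fun t => ?_, fun {i} hi => ?_, hp⟩
  · rw [Nat.cast_add_one, contDiff_succ_iff_deriv]
    exact ⟨fun x => (h t x).differentiableAt, by simp, hd t ▸ hg.contDiff t⟩
  · cases i with
    | zero => simpa only [iteratedDeriv_zero] using hf
    | succ i =>
      simpa only [iteratedDeriv_succ', hd] using hg.continuous_iteratedDeriv (by omega)

lemma of_time {c : ℝ → ℝ} (hc : Continuous c) : SpaceC n fun t _ => c t where
  contDiff _ := contDiff_const
  continuous_iteratedDeriv _ := by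
    simp only [iteratedDeriv_const, uncurry_def]
    split_ifs
    exacts [hc.comp continuous_fst, continuous_const]
  periodic _ _ := rfl

lemma add (hf : SpaceC n f) (hg : SpaceC n g) : SpaceC n fun t x => f t x + g t x where
  contDiff t := (hf.contDiff t).add (hg.contDiff t)
  continuous_iteratedDeriv {i} hi := by
    have : ∀ t, ∂[i] (fun x => f t x + g t x) = fun x => ∂[i] (f t) x + ∂[i] (g t) x := fun t =>
      funext fun x => iteratedDeriv_fun_add ((hf.contDiff t).contDiffAt.of_le (mod_cast hi))
        ((hg.contDiff t).contDiffAt.of_le (mod_cast hi))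
    simp only [this]
    exact (hf.continuous_iteratedDeriv hi).add (hg.continuous_iteratedDeriv hi)
  periodic t x := by simp only [hf.periodic t x, hg.periodic t x]

lemma mul (hf : SpaceC n f) (hg : SpaceC n g) : SpaceC n fun t x => f t x * g t x where
  contDiff t := (hf.contDiff t).mul (hg.contDiff t)
  continuous_iteratedDeriv {i} hi := by
    have : ∀ t, ∂[i] (fun x => f t x * g t x) = fun x =>
        ∑ k ∈ Finset.range (i + 1), i.choose k * ∂[k] (f t) x * ∂[i - k] (g t) x := fun t =>
      funext fun x => iteratedDeriv_fun_mul ((hf.contDiff t).contDiffAt.of_le (mod_cast hi))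
        ((hg.contDiff t).contDiffAt.of_le (mod_cast hi))
    simp only [this]
    refine continuous_finsetSum _ fun k hk => ?_
    rw [Finset.mem_range] at hk
    exact (continuous_const.mul (hf.continuous_iteratedDeriv (by omega))).mul
      (hg.continuous_iteratedDeriv (by omega))
  periodic t x := by simp only [hf.periodic t x, hg.periodic t x]

lemma const_mul (c : ℝ) (hf : SpaceC n f) : SpaceC n fun t x => c * f t x :=
  (of_time continuous_const).mul hf

lemma sub (hf : SpaceC n f) (hg : SpaceC n g) : SpaceC n fun t x => f t x - g t x := by
  simpa only [neg_one_mul, ← sub_eq_add_neg] using hf.add (hg.const_mul (-1))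

lemma pow (hf : SpaceC n f) (m : ℕ) : SpaceC n fun t x => f t x ^ m := by
  induction m with
  | zero => simpa only [pow_zero] using of_time (n := n) continuous_const
  | succ m ih => simpa only [pow_succ] using ih.mul hf

lemma sum {ι : Type*} (s : Finset ι) {F : ι → ℝ → ℝ → ℝ} (hF : ∀ i, SpaceC n (F i)) :
    SpaceC n fun t x => ∑ i ∈ s, F i t x := by
  classical
  induction s using Finset.induction_on with
  | empty => simpa only [Finset.sum_empty] using of_time (n := n) continuous_const
  | insert i s hi ih => simpa only [Finset.sum_insert hi] using (hF i).add ih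

end SpaceC

lemma SpaceC.nfun {n : ℕ} {u : ℝ → ℝ → ℝ} (hu : SpaceC (n + 3) u) {j0 : ℕ} (lam : Fin j0 → ℝ)
    (a b c d : Fin j0 → ℕ) : SpaceC n fun t x => Nfun j0 lam a b c d (u t) x := by
  simp only [Nfun, ← iteratedDeriv_one]
  have hd : ∀ i ≤ 3, SpaceC n fun t => ∂[i] (u t) := fun i hi => hu.iteratedDeriv (by omega)
  exact SpaceC.sum _ fun j => (((((hd 3 le_rfl).pow _).const_mul _).mul
    ((hd 2 (by norm_num)).pow _)).mul ((hd 1 (by norm_num)).pow _)).mul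
    ((hu.mono (by omega)).pow _)

/-! ### Time regularity -/

lemma hasDerivAt_integral_param {f f' : ℝ → ℝ → ℝ} {I : Set ℝ} (hI : IsOpen I)
    (hf : Continuous (uncurry f)) (hf' : Continuous (uncurry f'))
    (h : ∀ t ∈ I, ∀ x, HasDerivAt (fun τ => f τ x) (f' t x) t) (a b : ℝ) {t : ℝ} (ht : t ∈ I) :
    HasDerivAt (fun τ => ∫ x in a..b, f τ x) (∫ x in a..b, f' t x) t := by
  obtain ⟨ε, hε, hεI⟩ := Metric.nhds_basis_closedBall.mem_iff.1 (hI.mem_nhds ht)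
  obtain ⟨C, hC⟩ := ((isCompact_closedBall t ε).prod
    (isCompact_uIcc (a := a) (b := b))).exists_bound_of_continuousOn hf'.continuousOn
  refine (intervalIntegral.hasDerivAt_integral_of_dominated_loc_of_deriv_le
    (bound := fun _ => C) (Metric.closedBall_mem_nhds t hε)
    (.of_forall fun τ => ?_) ?_ ?_ ?_ ?_ ?_).2
  · exact (hf.comp (Continuous.prodMk_right τ)).aestronglyMeasurable
  · exact (hf.comp (Continuous.prodMk_right t)).intervalIntegrable _ _
  · exact (hf'.comp (Continuous.prodMk_right t)).aestronglyMeasurable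
  · exact .of_forall fun x hx τ hτ => hC (τ, x) ⟨hτ, uIoc_subset_uIcc hx⟩
  · exact continuous_const.intervalIntegrable _ _
  · exact .of_forall fun x _ τ hτ => h τ (hεI hτ) x

lemma continuous_integral_param {f : ℝ → ℝ → ℝ} (hf : Continuous (uncurry f)) (a b : ℝ) :
    Continuous fun t => ∫ x in a..b, f t x :=
  intervalIntegral.continuous_parametric_intervalIntegral_of_continuous' hf a b

lemma continuous_primitive_param {f : ℝ → ℝ → ℝ} (hf : Continuous (uncurry f)) (a : ℝ) :
    Continuous (uncurry fun t x => ∫ y in a..x, f t y) :=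
  intervalIntegral.continuous_parametric_intervalIntegral_of_continuous
    (f := fun (p : ℝ × ℝ) y => f p.1 y)
    (hf.comp ((continuous_fst.comp continuous_fst).prodMk continuous_snd)) continuous_snd

/-- `f t x` is jointly continuous, and continuously differentiable in `t ∈ I` with a derivative
that extends to a jointly continuous function. -/
structure TimeC1 (I : Set ℝ) (f : ℝ → ℝ → ℝ) : Prop where
  continuous : Continuous (uncurry f)
  exists_hasDerivAt : ∃ f' : ℝ → ℝ → ℝ, Continuous (uncurry f') ∧
    ∀ t ∈ I, ∀ x, HasDerivAt (fun τ => f τ x) (f' t x) t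

namespace TimeC1

variable {I : Set ℝ} {f g : ℝ → ℝ → ℝ}

lemma of_space {c : ℝ → ℝ} (hc : Continuous c) : TimeC1 I fun _ x => c x :=
  ⟨hc.comp continuous_snd, fun _ _ => 0, continuous_const, fun t _ x => hasDerivAt_const t (c x)⟩

lemma add (hf : TimeC1 I f) (hg : TimeC1 I g) : TimeC1 I fun t x => f t x + g t x := by
  obtain ⟨cf, f', cf', hf'⟩ := hf
  obtain ⟨cg, g', cg', hg'⟩ := hg
  exact ⟨cf.add cg, fun t x => f' t x + g' t x, cf'.add cg',
    fun t ht x => (hf' t ht x).add (hg' t ht x)⟩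

lemma mul (hf : TimeC1 I f) (hg : TimeC1 I g) : TimeC1 I fun t x => f t x * g t x := by
  obtain ⟨cf, f', cf', hf'⟩ := hf
  obtain ⟨cg, g', cg', hg'⟩ := hg
  exact ⟨cf.mul cg, fun t x => f' t x * g t x + f t x * g' t x, (cf'.mul cg).add (cf.mul cg'),
    fun t ht x => (hf' t ht x).mul (hg' t ht x)⟩

lemma const_mul (c : ℝ) (hf : TimeC1 I f) : TimeC1 I fun t x => c * f t x :=
  (of_space continuous_const).mul hf

lemma sub (hf : TimeC1 I f) (hg : TimeC1 I g) : TimeC1 I fun t x => f t x - g t x := by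
  simpa only [neg_one_mul, ← sub_eq_add_neg] using hf.add (hg.const_mul (-1))

lemma pow (hf : TimeC1 I f) (m : ℕ) : TimeC1 I fun t x => f t x ^ m := by
  induction m with
  | zero => simpa only [pow_zero] using of_space (I := I) continuous_const
  | succ m ih => simpa only [pow_succ] using ih.mul hf

lemma sum {ι : Type*} (s : Finset ι) {F : ι → ℝ → ℝ → ℝ} (hF : ∀ i, TimeC1 I (F i)) :
    TimeC1 I fun t x => ∑ i ∈ s, F i t x := by
  classical
  induction s using Finset.induction_on with
  | empty => simpa only [Finset.sum_empty] using of_space (I := I) continuous_const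
  | insert i s hi ih => simpa only [Finset.sum_insert hi] using (hF i).add ih

lemma primitive (hI : IsOpen I) (hf : TimeC1 I f) (a : ℝ) :
    TimeC1 I fun t x => ∫ y in a..x, f t y := by
  obtain ⟨cf, f', cf', hf'⟩ := hf
  exact ⟨continuous_primitive_param cf a, fun t x => ∫ y in a..x, f' t y,
    continuous_primitive_param cf' a,
    fun t ht x => hasDerivAt_integral_param hI cf cf' hf' a x ht⟩

lemma integral (hI : IsOpen I) (hf : TimeC1 I f) (a b : ℝ) :
    TimeC1 I fun t _ => ∫ y in a..b, f t y := by
  obtain ⟨cf, f', cf', hf'⟩ := hf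
  exact ⟨(continuous_integral_param cf a b).comp continuous_fst,
    fun t _ => ∫ y in a..b, f' t y, (continuous_integral_param cf' a b).comp continuous_fst,
    fun t ht _ => hasDerivAt_integral_param hI cf cf' hf' a b ht⟩

lemma nfun {u : ℝ → ℝ → ℝ} (hu : ∀ i ≤ 3, TimeC1 I fun t => ∂[i] (u t)) {j0 : ℕ}
    (lam : Fin j0 → ℝ) (a b c d : Fin j0 → ℕ) :
    TimeC1 I fun t x => Nfun j0 lam a b c d (u t) x := by
  have hu0 : TimeC1 I u := by simpa only [iteratedDeriv_zero] using hu 0 (by norm_num)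
  simp only [Nfun, ← iteratedDeriv_one]
  exact sum _ fun j => (((((hu 3 le_rfl).pow _).const_mul _).mul
    ((hu 2 (by norm_num)).pow _)).mul ((hu 1 (by norm_num)).pow _)).mul (hu0.pow _)

end TimeC1

/-- `f` is a primitive of `F` in time on `[T₁, T₂]`, for every fixed `x`. -/
def IsTimePrimitive (T₁ T₂ : ℝ) (f F : ℝ → ℝ → ℝ) : Prop :=
  ∀ t ∈ Icc T₁ T₂, ∀ x, f t x = f T₁ x + ∫ s in T₁..t, F s x

namespace IsTimePrimitive

variable {T₁ T₂ : ℝ} {f F g G : ℝ → ℝ → ℝ}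

lemma hasDerivAt (h : IsTimePrimitive T₁ T₂ f F) (hF : Continuous (uncurry F)) {t : ℝ}
    (ht : t ∈ Ioo T₁ T₂) (x : ℝ) : HasDerivAt (fun τ => f τ x) (F t x) t := by
  have hFx : Continuous fun s => F s x := hF.comp (Continuous.prodMk_left x)
  refine (hFx.integral_hasStrictDerivAt T₁ t).hasDerivAt.const_add (f T₁ x)
    |>.congr_of_eventuallyEq ?_
  filter_upwards [Ioo_mem_nhds ht.1 ht.2] with s hs using h s (Ioo_subset_Icc_self hs) x

lemma timeC1 (h : IsTimePrimitive T₁ T₂ f F) (hf : Continuous (uncurry f))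
    (hF : Continuous (uncurry F)) : TimeC1 (Ioo T₁ T₂) f :=
  ⟨hf, F, hF, fun _ ht x => h.hasDerivAt hF ht x⟩

lemma sub (hf : IsTimePrimitive T₁ T₂ f F) (hg : IsTimePrimitive T₁ T₂ g G)
    (cF : Continuous (uncurry F)) (cG : Continuous (uncurry G)) :
    IsTimePrimitive T₁ T₂ (fun t x => f t x - g t x) fun t x => F t x - G t x := by
  intro t ht x
  have hint : ∫ s in T₁..t, (F s x - G s x) = (∫ s in T₁..t, F s x) - ∫ s in T₁..t, G s x :=
    intervalIntegral.integral_sub (cF.along_fst.intervalIntegrable _ _)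
      (cG.along_fst.intervalIntegrable _ _)
  simp only [hint, hf t ht x, hg t ht x]
  ring

lemma iteratedDeriv {n i : ℕ} (h : IsTimePrimitive T₁ T₂ f F) (hf : SpaceC n f)
    (hF : SpaceC n F) (hi : i ≤ n) :
    IsTimePrimitive T₁ T₂ (fun t => ∂[i] (f t)) fun t => ∂[i] (F t) := by
  induction i with
  | zero => simpa only [iteratedDeriv_zero] using h
  | succ i ih =>
    intro t ht x
    have hint : HasDerivAt (fun y => ∫ s in T₁..t, ∂[i] (F s) y)
        (∫ s in T₁..t, ∂[i + 1] (F s) x) x :=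
      hasDerivAt_integral_param (f := fun y s => ∂[i] (F s) y) (f' := fun y s => ∂[i + 1] (F s) y)
        isOpen_univ ((hF.continuous_iteratedDeriv (by omega)).comp continuous_swap)
        ((hF.continuous_iteratedDeriv hi).comp continuous_swap)
        (fun y _ s => hF.hasDerivAt_iteratedDeriv hi s y) T₁ t (mem_univ x)
    have hsum := (hf.hasDerivAt_iteratedDeriv hi T₁ x).add hint
    refine (hf.hasDerivAt_iteratedDeriv hi t x).unique (hsum.congr_of_eventuallyEq ?_)
    exact .of_forall fun y => ih (by omega) t ht y

end IsTimePrimitive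

/-! ### Fourier coefficients -/

/-- The Japanese bracket `⟨k⟩ = (1 + k²)^{1/2}`, the Fourier weight of the Sobolev norms. -/
noncomputable def bracket (k : ℤ) : ℝ := √(1 + (k : ℝ) ^ 2)

lemma bracket_sq (k : ℤ) : bracket k ^ 2 = 1 + (k : ℝ) ^ 2 := sq_sqrt (by positivity)

lemma one_le_bracket (k : ℤ) : 1 ≤ bracket k :=
  one_le_sqrt.2 (le_add_of_nonneg_right (sq_nonneg _))

lemma bracket_pos (k : ℤ) : 0 < bracket k := one_pos.trans_le (one_le_bracket k)

lemma abs_le_bracket (k : ℤ) : |(k : ℝ)| ≤ bracket k := abs_le_sqrt (by linarith)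

lemma summable_bracket_rpow {p : ℝ} (hp : 1 < p) : Summable fun k => bracket k ^ (-p) := by
  refine .of_norm_bounded_eventually (summable_abs_int_rpow hp) ?_
  filter_upwards [(finite_singleton (0 : ℤ)).compl_mem_cofinite] with k hk
  rw [norm_of_nonneg (rpow_nonneg (bracket_pos k).le _)]
  exact rpow_le_rpow_of_nonpos (abs_pos.2 (Int.cast_ne_zero.2 hk)) (abs_le_bracket k)
    (by linarith)

lemma integral_mul_deriv_of_periodic {A : Type*} [NormedRing A] [NormedAlgebra ℝ A]
    [CompleteSpace A] {f f' g g' : ℝ → A} {p : ℝ} (hf : Periodic f p) (hg : Periodic g p)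
    (df : ∀ x, HasDerivAt f (f' x) x) (dg : ∀ x, HasDerivAt g (g' x) x)
    (cf : Continuous f') (cg : Continuous g') :
    ∫ x in (0 : ℝ)..p, f x * g' x = -∫ x in (0 : ℝ)..p, f' x * g x := by
  have hparts := intervalIntegral.integral_mul_deriv_eq_deriv_mul (a := 0) (b := p)
    (fun x _ => df x) (fun x _ => dg x) (cf.intervalIntegrable _ _) (cg.intervalIntegrable _ _)
  rwa [hf.eq, hg.eq, sub_self, zero_sub] at hparts

lemma fc_sub {f g : ℝ → ℝ} (hf : Continuous f) (hg : Continuous g) (k : ℤ) :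
    fc (fun x => f x - g x) k = fc f k - fc g k := by
  simp only [fc, Complex.ofReal_sub, sub_mul]
  rw [intervalIntegral.integral_sub (Continuous.intervalIntegrable (by fun_prop) _ _)
    (Continuous.intervalIntegrable (by fun_prop) _ _), mul_sub]

lemma periodic_cexp (k : ℤ) : Periodic (fun x : ℝ => Complex.exp (Complex.I * k * x)) (2 * π) := by
  intro x
  have hadd : Complex.I * k * ((x + 2 * π : ℝ) : ℂ) =
      Complex.I * k * x + k * (2 * π * Complex.I) := by push_cast; ring
  simp only [hadd, Complex.exp_add, Complex.exp_int_mul_two_pi_mul_I, mul_one]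

lemma hasDerivAt_cexp (k : ℤ) (x : ℝ) :
    HasDerivAt (fun x : ℝ => Complex.exp (Complex.I * k * x))
      (Complex.I * k * Complex.exp (Complex.I * k * x)) x := by
  simpa only [mul_comm, mul_one] using
    ((hasDerivAt_id' (x : ℂ)).const_mul (Complex.I * (k : ℂ))).cexp.comp_ofReal

lemma norm_cexp (k : ℤ) (x : ℝ) : ‖Complex.exp (Complex.I * k * x)‖ = 1 := by
  rw [mul_assoc, mul_comm, ← Complex.ofReal_intCast, ← Complex.ofReal_mul,
    Complex.norm_exp_ofReal_mul_I]

lemma fc_deriv {f f' : ℝ → ℝ} (hp : Periodic f (2 * π)) (hf : ∀ x, HasDerivAt f (f' x) x)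
    (hf' : Continuous f') (k : ℤ) : fc f' k = Complex.I * k * fc f k := by
  have hexp : ∀ x : ℝ, -Complex.I * k * x = Complex.I * (-k : ℤ) * x := fun x => by
    push_cast; ring
  have hp' : Periodic (fun x => (f x : ℂ)) (2 * π) := fun x => by simp only [hp x]
  have hparts := integral_mul_deriv_of_periodic (periodic_cexp (-k)) hp'
    (hasDerivAt_cexp (-k)) (fun x => (hf x).ofReal_comp) (by fun_prop) (by fun_prop)
  simp only [fc, hexp, mul_comm (Complex.ofReal _) (Complex.exp _), hparts]
  simp only [mul_assoc, intervalIntegral.integral_const_mul]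
  push_cast
  ring

lemma fourier_coe_eq_cexp {p : ℝ} (hp : p = 2 * π) (k : ℤ) (x : ℝ) :
    fourier k (x : AddCircle p) = Complex.exp (Complex.I * k * x) := by
  have : (π : ℂ) ≠ 0 := Complex.ofReal_ne_zero.2 pi_ne_zero
  rw [fourier_coe_apply, hp]
  congr 1
  push_cast
  field_simp

lemma fc_eq_smul_integral (f : ℝ → ℝ) (k : ℤ) :
    fc f k = (1 / (2 * π)) • ∫ x in (0 : ℝ)..2 * π,
      Complex.exp (Complex.I * (-k : ℤ) * x) • (f x : ℂ) := by
  rw [fc, Complex.real_smul]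
  push_cast
  simp only [smul_eq_mul, one_div, mul_neg, neg_mul, mul_comm (f _ : ℂ)]

lemma fourierCoeffOn_eq_fc (f : ℝ → ℝ) (k : ℤ) :
    fourierCoeffOn two_pi_pos (fun x => (f x : ℂ)) k = fc f k := by
  simp only [fourierCoeffOn_eq_integral, fc_eq_smul_integral,
    fourier_coe_eq_cexp (sub_zero (2 * π)), sub_zero]

lemma hasSum_norm_fc_sq {f : ℝ → ℝ} (hf : Continuous f) :
    HasSum (fun k => ‖fc f k‖ ^ 2) ((2 * π)⁻¹ * ∫ x in (0 : ℝ)..2 * π, f x ^ 2) := by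
  have hL2 : MemLp (fun x => (f x : ℂ)) 2 (volume.restrict (Ioc 0 (2 * π))) := by
    obtain ⟨C, hC⟩ := (isCompact_Icc (a := 0) (b := 2 * π)).exists_bound_of_continuousOn
      (Complex.continuous_ofReal.comp hf).continuousOn
    exact .of_bound (by fun_prop) C
      ((ae_restrict_mem measurableSet_Ioc).mono fun x hx => hC x (Ioc_subset_Icc_self hx))
  simpa only [fourierCoeffOn_eq_fc, sub_zero, smul_eq_mul, Complex.norm_real, norm_eq_abs, sq_abs]
    using hasSum_sq_fourierCoeffOn two_pi_pos hL2

lemma norm_fc_sq_le {f : ℝ → ℝ} (hf : Continuous f) (k : ℤ) :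
    ‖fc f k‖ ^ 2 ≤ (2 * π)⁻¹ * ∫ x in (0 : ℝ)..2 * π, f x ^ 2 :=
  le_hasSum (hasSum_norm_fc_sq hf) k fun _ _ => sq_nonneg _

lemma norm_fc_le_hsNorm_zero {f : ℝ → ℝ} (hf : Continuous f) (k : ℤ) : ‖fc f k‖ ≤ hsNorm 0 f := by
  refine le_sqrt_of_sq_le ?_
  simpa only [pow_zero, one_mul] using
    (hasSum_norm_fc_sq hf).summable.le_tsum k fun _ _ => sq_nonneg _

lemma norm_fc_le_of_hsNorm_le {s : ℕ} {f : ℝ → ℝ} {M : ℝ} (hf : MemHs s f) (hM : hsNorm s f ≤ M)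
    (k : ℤ) : ‖fc f k‖ ≤ M / bracket k ^ s := by
  rw [le_div_iff₀ (pow_pos (bracket_pos k) s)]
  refine (le_sqrt_of_sq_le ?_).trans hM
  rw [mul_pow, ← pow_mul, mul_comm s, pow_mul, bracket_sq, mul_comm]
  exact hf.2.2.le_tsum k fun j _ => by positivity

lemma hasSum_fc_mul_cexp {f : ℝ → ℝ} (hf : Continuous f) (hp : Periodic f (2 * π))
    (hs : Summable (fc f)) (x : ℝ) :
    HasSum (fun k : ℤ => fc f k * Complex.exp (Complex.I * k * x)) (f x) := by
  have : Fact (0 < 2 * π) := ⟨two_pi_pos⟩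
  have hp' : Periodic (fun y => (f y : ℂ)) (2 * π) := fun y => by simp only [hp y]
  let g : C(AddCircle (2 * π), ℂ) :=
    ⟨hp'.lift, continuous_coinduced_dom.2 (Complex.continuous_ofReal.comp hf)⟩
  have hcoeff : fourierCoeff g = fc f := funext fun k => by
    simp only [fourierCoeff_eq_intervalIntegral _ _ 0, fc_eq_smul_integral, zero_add,
      fourier_coe_eq_cexp rfl, g, ContinuousMap.coe_mk, Periodic.lift_coe]
  have hsum := has_pointwise_sum_fourier_series_of_summable (hcoeff ▸ hs) (x : AddCircle (2 * π))
  simp only [hcoeff, fourier_coe_eq_cexp rfl, smul_eq_mul] at hsum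
  exact hsum

/-! ### Trigonometric series and paths in Sobolev spaces -/

/-- The real part of the trigonometric series with coefficients `c`. -/
noncomputable def trigSeries (c : ℤ → ℂ) (x : ℝ) : ℝ :=
  (∑' k : ℤ, c k * Complex.exp (Complex.I * k * x)).re

lemma norm_mul_cexp (z : ℂ) (k : ℤ) (x : ℝ) : ‖z * Complex.exp (Complex.I * k * x)‖ = ‖z‖ := by
  rw [norm_mul, norm_cexp, mul_one]

lemma norm_deriv_coeff_le (n : ℕ) (z : ℂ) (k : ℤ) :
    ‖(Complex.I * k) ^ n * z‖ ≤ bracket k ^ n * ‖z‖ := by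
  rw [norm_mul, norm_pow, norm_mul, Complex.norm_I, one_mul, Complex.norm_intCast]
  gcongr
  exact abs_le_bracket k

lemma summable_bracket_pow_mul_norm {c : ℤ → ℂ} {b : ℤ → ℝ} (hcb : ∀ k, ‖c k‖ ≤ b k) {n : ℕ}
    (hb : Summable fun k => bracket k ^ n * b k) {i : ℕ} (hi : i ≤ n) :
    Summable fun k => bracket k ^ i * ‖c k‖ := by
  refine .of_nonneg_of_le (fun k => mul_nonneg (pow_nonneg (bracket_pos k).le i) (norm_nonneg _))
    (fun k => ?_) hb
  exact mul_le_mul (pow_le_pow_right₀ (one_le_bracket k) hi) (hcb k) (norm_nonneg _)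
    (pow_nonneg (bracket_pos k).le n)

lemma summable_bracket_mul_norm_deriv_coeff {c : ℤ → ℂ} {n : ℕ}
    (hc : Summable fun k => bracket k ^ (n + 1) * ‖c k‖) :
    Summable fun k => bracket k * ‖(Complex.I * k) ^ n * c k‖ := by
  refine .of_nonneg_of_le (fun k => mul_nonneg (bracket_pos k).le (norm_nonneg _))
    (fun k => ?_) hc
  rw [pow_succ', mul_assoc]
  exact mul_le_mul_of_nonneg_left (norm_deriv_coeff_le n _ k) (bracket_pos k).le

lemma abs_trigSeries_le {c : ℤ → ℂ} (hc : Summable fun k => ‖c k‖) (x : ℝ) :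
    |trigSeries c x| ≤ ∑' k, ‖c k‖ := by
  refine (Complex.abs_re_le_norm _).trans ?_
  simpa only [norm_mul_cexp] using norm_tsum_le_tsum_norm
    (f := fun k : ℤ => c k * Complex.exp (Complex.I * k * x)) (by simpa only [norm_mul_cexp])

lemma periodic_trigSeries (c : ℤ → ℂ) : Periodic (trigSeries c) (2 * π) := fun x =>
  congrArg Complex.re (tsum_congr fun k => congrArg (c k * ·) (periodic_cexp k x))

lemma continuous_trigSeries {c : ℝ → ℤ → ℂ} {b : ℤ → ℝ} (hc : ∀ k, Continuous fun t => c t k)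
    (hcb : ∀ t k, ‖c t k‖ ≤ b k) (hb : Summable b) :
    Continuous (uncurry fun t => trigSeries (c t)) := by
  refine Complex.continuous_re.comp (continuous_tsum (fun k => ?_) hb fun k p => ?_)
  · exact ((hc k).comp continuous_fst).mul (by fun_prop)
  · exact (norm_mul_cexp _ k p.2).trans_le (hcb p.1 k)

lemma hasDerivAt_trigSeries {c : ℤ → ℂ} (hc : Summable fun k => bracket k * ‖c k‖) (x : ℝ) :
    HasDerivAt (trigSeries c) (trigSeries (fun k => Complex.I * k * c k) x) x := by
  have hterm : ∀ (k : ℤ) (y : ℝ), HasDerivAt (fun y : ℝ => c k * Complex.exp (Complex.I * k * y))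
      (Complex.I * k * c k * Complex.exp (Complex.I * k * y)) y := fun k y =>
    ((hasDerivAt_cexp k y).const_mul (c k)).congr_deriv (by ring)
  refine Complex.reCLM.hasFDerivAt.comp_hasDerivAt x
    (hasDerivAt_tsum hc hterm (fun k y => ?_) (y₀ := 0) (.of_norm ?_) x)
  · simpa only [norm_mul_cexp, pow_one] using norm_deriv_coeff_le 1 (c k) k
  · simp only [norm_mul_cexp]
    exact hc.of_nonneg_of_le (fun k => norm_nonneg _)
      fun k => le_mul_of_one_le_left (norm_nonneg _) (one_le_bracket k)

lemma iteratedDeriv_trigSeries {c : ℤ → ℂ} {n : ℕ}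
    (hc : Summable fun k => bracket k ^ n * ‖c k‖) :
    ∂[n] (trigSeries c) = trigSeries fun k => (Complex.I * k) ^ n * c k := by
  induction n with
  | zero => simp only [iteratedDeriv_zero, pow_zero, one_mul]
  | succ n ih =>
    rw [iteratedDeriv_succ, ih (summable_bracket_pow_mul_norm (fun k => le_rfl) hc n.le_succ)]
    simp only [pow_succ', mul_assoc _ (_ ^ n) (c _)]
    exact funext fun x =>
      (hasDerivAt_trigSeries (summable_bracket_mul_norm_deriv_coeff hc) x).deriv

lemma abs_iteratedDeriv_trigSeries_le {c : ℤ → ℂ} {n : ℕ} {b : ℤ → ℝ}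
    (hcb : ∀ k, bracket k ^ n * ‖c k‖ ≤ b k) (hb : Summable b) (x : ℝ) :
    |∂[n] (trigSeries c) x| ≤ ∑' k, b k := by
  have hle : ∀ k, ‖(Complex.I * k) ^ n * c k‖ ≤ b k := fun k =>
    (norm_deriv_coeff_le n _ k).trans (hcb k)
  have hsum : Summable fun k => ‖(Complex.I * k) ^ n * c k‖ :=
    .of_nonneg_of_le (fun k => norm_nonneg _) hle hb
  rw [iteratedDeriv_trigSeries (.of_nonneg_of_le
    (fun k => mul_nonneg (pow_nonneg (bracket_pos k).le n) (norm_nonneg _)) hcb hb)]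
  exact (abs_trigSeries_le hsum x).trans (hsum.tsum_le_tsum hle hb)

lemma SpaceC.trigSeries {c : ℝ → ℤ → ℂ} {b : ℤ → ℝ} {n : ℕ}
    (hc : ∀ k, Continuous fun t => c t k) (hcb : ∀ t k, ‖c t k‖ ≤ b k)
    (hb : Summable fun k => bracket k ^ n * b k) : SpaceC n fun t => trigSeries (c t) := by
  have hsum : ∀ t, ∀ i ≤ n, Summable fun k => bracket k ^ i * ‖c t k‖ := fun t i hi =>
    summable_bracket_pow_mul_norm (hcb t) hb hi
  have hcont : ∀ i ≤ n, Continuous (uncurry fun t => ∂[i] (FifthOrderStmt3.trigSeries (c t))) := by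
    intro i hi
    simp only [fun t => iteratedDeriv_trigSeries (hsum t i hi)]
    refine continuous_trigSeries (fun k => continuous_const.mul (hc k)) (fun t k => ?_) hb
    calc _ ≤ bracket k ^ i * ‖c t k‖ := norm_deriv_coeff_le i _ k
      _ ≤ bracket k ^ n * b k := mul_le_mul (pow_le_pow_right₀ (one_le_bracket k) hi) (hcb t k)
        (norm_nonneg _) (pow_nonneg (bracket_pos k).le n)
  refine ⟨fun t => contDiff_nat_iff_iteratedDeriv.2 ⟨fun i hi => (hcont i hi).along_snd,
    fun i hi x => ?_⟩, fun {i} hi => hcont i hi, fun t => periodic_trigSeries (c t)⟩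
  rw [iteratedDeriv_trigSeries (hsum t i hi.le)]
  exact (hasDerivAt_trigSeries
    (summable_bracket_mul_norm_deriv_coeff (hsum t (i + 1) hi)) x).differentiableAt

/-- What is used of a bounded path in `H^s(𝕋)` that is continuous in `L²(𝕋)`: its Fourier
coefficients depend continuously on time and are at most `M ⟨k⟩^{-s}`. -/
structure SobolevPath (s : ℕ) (M : ℝ) (u : ℝ → ℝ → ℝ) : Prop where
  continuous (t : ℝ) : Continuous (u t)
  periodic (t : ℝ) : Periodic (u t) (2 * π)
  continuous_fc (k : ℤ) : Continuous fun t => fc (u t) k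
  norm_fc_le (t : ℝ) (k : ℤ) : ‖fc (u t) k‖ ≤ M / bracket k ^ s

namespace SobolevPath

variable {s : ℕ} {M N : ℝ} {u v : ℝ → ℝ → ℝ}

lemma summable {n : ℕ} (hns : n + 2 ≤ s) (M : ℝ) :
    Summable fun k => bracket k ^ n * (M / bracket k ^ s) := by
  refine .of_norm_bounded ((summable_bracket_rpow one_lt_two).mul_left |M|) fun k => ?_
  have hk := bracket_pos k
  rw [rpow_neg hk.le, rpow_ofNat, norm_mul, norm_div, norm_pow, norm_pow, norm_of_nonneg hk.le,
    norm_eq_abs, mul_div_assoc', mul_comm, mul_div_assoc]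
  gcongr
  rw [div_le_iff₀ (pow_pos hk s), inv_mul_eq_div, le_div_iff₀ (pow_pos hk 2), ← pow_add]
  exact pow_le_pow_right₀ (one_le_bracket k) hns

lemma eq_trigSeries (hu : SobolevPath s M u) (hs : 2 ≤ s) (t : ℝ) :
    u t = trigSeries (fc (u t)) := by
  have hsum : Summable (fc (u t)) := .of_norm_bounded
    (by simpa only [pow_zero, one_mul] using summable (n := 0) (by omega) M) (hu.norm_fc_le t)
  funext x
  rw [trigSeries, (hasSum_fc_mul_cexp (hu.continuous t) (hu.periodic t) hsum x).tsum_eq,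
    Complex.ofReal_re]

lemma spaceC (hu : SobolevPath s M u) {n : ℕ} (hns : n + 2 ≤ s) : SpaceC n u := by
  rw [funext (hu.eq_trigSeries (by omega))]
  exact .trigSeries hu.continuous_fc hu.norm_fc_le (summable hns M)

lemma sub (hu : SobolevPath s M u) (hv : SobolevPath s N v) :
    SobolevPath s (M + N) fun t x => u t x - v t x where
  continuous t := (hu.continuous t).sub (hv.continuous t)
  periodic t x := by simp only [hu.periodic t x, hv.periodic t x]
  continuous_fc k := by
    simp only [fun t => fc_sub (hu.continuous t) (hv.continuous t) k]
    exact (hu.continuous_fc k).sub (hv.continuous_fc k)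
  norm_fc_le t k := by
    rw [fc_sub (hu.continuous t) (hv.continuous t) k, add_div]
    exact (norm_sub_le _ _).trans (add_le_add (hu.norm_fc_le t k) (hv.norm_fc_le t k))

lemma of_memHs {T₁ T₂ : ℝ} (hT : T₁ ≤ T₂) (hmem : ∀ t ∈ Icc T₁ T₂, MemHs s (u t))
    (hM : ∀ t ∈ Icc T₁ T₂, hsNorm s (u t) ≤ M) (hcont : ContInHs 0 (Icc T₁ T₂) u) :
    SobolevPath s M (IccExtend hT fun t => u t) where
  continuous t := (hmem _ (projIcc T₁ T₂ hT t).2).1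
  periodic t := (hmem _ (projIcc T₁ T₂ hT t).2).2.1
  continuous_fc k := by
    refine Continuous.Icc_extend' (f := fun t : Icc T₁ T₂ => fc (u t) k) ?_
    refine Metric.continuous_iff.2 fun t₀ ε hε => ?_
    obtain ⟨δ, hδ, hclose⟩ := hcont t₀ t₀.2 ε hε
    refine ⟨δ, hδ, fun t ht => ?_⟩
    have ht' := (hmem t t.2).1
    have ht₀ := (hmem t₀ t₀.2).1
    rw [dist_eq_norm, ← fc_sub ht' ht₀]
    exact (norm_fc_le_hsNorm_zero (ht'.sub ht₀) k).trans_lt (hclose t t.2 ht)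
  norm_fc_le t := norm_fc_le_of_hsNorm_le (hmem _ (projIcc T₁ T₂ hT t).2)
    (hM _ (projIcc T₁ T₂ hT t).2)

end SobolevPath

/-! ### Interpolation between the energy and the Sobolev bound -/

/-- The square of the `H¹(𝕋)` norm, in the normalisation `∫ (w² + w_x²)`. -/
noncomputable def energy (w : ℝ → ℝ → ℝ) (t : ℝ) : ℝ :=
  ∫ x in (0 : ℝ)..2 * π, (w t x ^ 2 + ∂[1] (w t) x ^ 2)

lemma energy_nonneg (w : ℝ → ℝ → ℝ) (t : ℝ) : 0 ≤ energy w t :=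
  intervalIntegral.integral_nonneg two_pi_pos.le fun x _ => by positivity

lemma bracket_sq_mul_norm_fc_sq_le {w : ℝ → ℝ → ℝ} (hw : SpaceC 1 w) (t : ℝ) (k : ℤ) :
    bracket k ^ 2 * ‖fc (w t) k‖ ^ 2 ≤ energy w t := by
  have hw0 : Continuous (w t) := hw.continuous.along_snd
  have hw1 : Continuous (∂[1] (w t)) := (hw.continuous_iteratedDeriv le_rfl).along_snd
  have hfc1 : fc (∂[1] (w t)) k = Complex.I * k * fc (w t) k :=
    fc_deriv (hw.periodic t)
      (by simpa only [iteratedDeriv_zero] using hw.hasDerivAt_iteratedDeriv one_pos t) hw1 k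
  have hsq : bracket k ^ 2 * ‖fc (w t) k‖ ^ 2 =
      ‖fc (w t) k‖ ^ 2 + ‖fc (∂[1] (w t)) k‖ ^ 2 := by
    rw [hfc1, norm_mul, norm_mul, Complex.norm_I, Complex.norm_intCast, one_mul, mul_pow, sq_abs,
      bracket_sq]
    ring
  have hE : energy w t = (∫ x in (0 : ℝ)..2 * π, w t x ^ 2) +
      ∫ x in (0 : ℝ)..2 * π, ∂[1] (w t) x ^ 2 :=
    intervalIntegral.integral_add ((hw0.pow 2).intervalIntegrable _ _)
      ((hw1.pow 2).intervalIntegrable _ _)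
  have hpi : (2 * π)⁻¹ ≤ 1 := inv_le_one_of_one_le₀ (by linarith [pi_gt_three])
  calc bracket k ^ 2 * ‖fc (w t) k‖ ^ 2 ≤ (2 * π)⁻¹ * energy w t := by
        rw [hsq, hE, mul_add]
        exact add_le_add (norm_fc_sq_le hw0 k) (norm_fc_sq_le hw1 k)
    _ ≤ energy w t := mul_le_of_le_one_left (energy_nonneg w t) hpi

namespace SobolevPath

variable {s i : ℕ} {M : ℝ} {w : ℝ → ℝ → ℝ}

lemma bracket_mul_norm_fc_cube_le (hw : SobolevPath s M w) (hs : 3 ≤ s) (hi : 3 * i + 2 ≤ s)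
    (t : ℝ) (k : ℤ) :
    (bracket k ^ i * ‖fc (w t) k‖) ^ 3 ≤ M * energy w t * (bracket k ^ 4)⁻¹ := by
  have hk := bracket_pos k
  have hfc : bracket k ^ s * ‖fc (w t) k‖ ≤ M := by
    have hle := hw.norm_fc_le t k
    rwa [le_div_iff₀' (pow_pos hk s)] at hle
  have hE := bracket_sq_mul_norm_fc_sq_le (hw.spaceC (n := 1) (by omega)) t k
  rw [le_mul_inv_iff₀ (pow_pos hk 4)]
  calc (bracket k ^ i * ‖fc (w t) k‖) ^ 3 * bracket k ^ 4
      = bracket k ^ (3 * i + 2) * ‖fc (w t) k‖ * (bracket k ^ 2 * ‖fc (w t) k‖ ^ 2) := by ring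
    _ ≤ bracket k ^ s * ‖fc (w t) k‖ * (bracket k ^ 2 * ‖fc (w t) k‖ ^ 2) := by
        gcongr
        exact one_le_bracket k
    _ ≤ M * energy w t :=
        mul_le_mul hfc hE (by positivity) ((by positivity : (0 : ℝ) ≤ _).trans hfc)

lemma exists_abs_iteratedDeriv_cube_le (hw : SobolevPath s M w) (hs : 3 ≤ s)
    (hi : 3 * i + 2 ≤ s) : ∃ C, ∀ t x, |∂[i] (w t) x| ^ 3 ≤ C * energy w t := by
  have hM : 0 ≤ M := nonneg_of_mul_nonneg_left
    ((norm_nonneg _).trans ((hw.norm_fc_le 0 0).trans_eq (div_eq_mul_inv _ _)))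
    (inv_pos.2 (pow_pos (bracket_pos 0) s))
  refine ⟨M * (∑' k, bracket k ^ (-(4 / 3) : ℝ)) ^ 3, fun t x => ?_⟩
  have hE : 0 ≤ M * energy w t := mul_nonneg hM (energy_nonneg w t)
  set r : ℝ := (M * energy w t) ^ (1 / 3 : ℝ) with hr
  have hr3 : r ^ 3 = M * energy w t := by
    rw [hr, ← rpow_mul_natCast hE]
    norm_num
  have hterm : ∀ k, bracket k ^ i * ‖fc (w t) k‖ ≤ r * bracket k ^ (-(4 / 3) : ℝ) := by
    intro k
    have hk := bracket_pos k
    refine le_of_pow_le_pow_left₀ three_ne_zero (by positivity)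
      ((hw.bracket_mul_norm_fc_cube_le hs hi t k).trans_eq ?_)
    rw [mul_pow, hr3, ← rpow_mul_natCast hk.le, ← rpow_natCast, ← rpow_neg hk.le]
    norm_num
  have hbound := abs_iteratedDeriv_trigSeries_le hterm
    ((summable_bracket_rpow (p := 4 / 3) (by norm_num)).mul_left r) x
  rw [← hw.eq_trigSeries (by omega), tsum_mul_left] at hbound
  calc |∂[i] (w t) x| ^ 3 ≤ (r * ∑' k, bracket k ^ (-(4 / 3) : ℝ)) ^ 3 := by gcongr
    _ = _ := by rw [mul_pow, hr3]; ring

end SobolevPath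

/-! ### The lemma of du Bois-Reymond -/

/-- `η` is a smooth function of time vanishing outside `(a, b)`. -/
structure IsTestFunction (a b : ℝ) (η : ℝ → ℝ) : Prop where
  contDiff : ContDiff ℝ (⊤ : ℕ∞) η
  eq_zero (t : ℝ) (ht : t ∉ Ioo a b) : η t = 0

lemma exists_isTestFunction_integral_eq_one {a b : ℝ} (hab : a < b) :
    ∃ θ, IsTestFunction a b θ ∧ ∫ t in a..b, θ t = 1 := by
  let B : ContDiffBump ((a + b) / 2) := ⟨(b - a) / 4, (b - a) / 2, by linarith, by linarith⟩
  have hsupp : support (B.normed volume) = Ioo a b := by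
    rw [B.support_normed_eq, ball_eq_Ioo]
    congr 1 <;> ring
  refine ⟨B.normed volume, ⟨B.contDiff_normed, fun t ht => ?_⟩, ?_⟩
  · rwa [← hsupp, notMem_support] at ht
  · rw [intervalIntegral.integral_eq_integral_of_support_subset (hsupp ▸ Ioo_subset_Ioc_self),
      B.integral_normed]

lemma integral_eq_zero_of_forall_uIcc {f : ℝ → ℝ} {a b : ℝ} (hf : ∀ t ∈ uIcc a b, f t = 0) :
    ∫ t in a..b, f t = 0 := by
  rw [intervalIntegral.integral_congr (g := fun _ => 0) hf, intervalIntegral.integral_zero]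

lemma IsTestFunction.primitive {a b : ℝ} {η : ℝ → ℝ} (hη : IsTestFunction a b η)
    (hint : ∫ t in a..b, η t = 0) : IsTestFunction a b fun t => ∫ s in a..t, η s := by
  have hc := hη.contDiff.continuous
  have hd : ∀ t, HasDerivAt (fun t => ∫ s in a..t, η s) (η t) t := fun t =>
    (hc.integral_hasStrictDerivAt a t).hasDerivAt
  refine ⟨contDiff_infty_iff_deriv.2 ⟨fun t => (hd t).differentiableAt, ?_⟩, fun t ht => ?_⟩
  · rw [funext fun t => (hd t).deriv]
    exact hη.contDiff
  · rcases le_or_gt t a with hta | hat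
    · refine integral_eq_zero_of_forall_uIcc fun s hs => hη.eq_zero s fun hs' => ?_
      rw [uIcc_of_ge hta] at hs
      exact hs'.1.not_ge hs.2
    · have hbt : b ≤ t := not_lt.1 fun htb => ht ⟨hat, htb⟩
      rw [← intervalIntegral.integral_add_adjacent_intervals (hc.intervalIntegrable a b)
        (hc.intervalIntegrable b t), hint, zero_add]
      refine integral_eq_zero_of_forall_uIcc fun s hs => hη.eq_zero s fun hs' => ?_
      rw [uIcc_of_le hbt] at hs
      exact hs'.2.not_ge hs.1

lemma exists_integral_mul_eq_of_integral_deriv_mul_eq_zero {a b : ℝ} (hab : a < b) {r : ℝ → ℝ}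
    (hr : Continuous r) (h : ∀ η, IsTestFunction a b η → ∫ t in a..b, deriv η t * r t = 0) :
    ∃ m, ∀ g, IsTestFunction a b g → ∫ t in a..b, g t * r t = m * ∫ t in a..b, g t := by
  obtain ⟨θ, hθ, hθ1⟩ := exists_isTestFunction_integral_eq_one hab
  refine ⟨∫ t in a..b, θ t * r t, fun g hg => ?_⟩
  set n := ∫ t in a..b, g t
  have hgc := hg.contDiff.continuous
  have hθc := hθ.contDiff.continuous
  have hf : IsTestFunction a b fun t => g t - n * θ t :=
    ⟨hg.contDiff.sub (contDiff_const.mul hθ.contDiff), fun t ht => by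
      simp only [hg.eq_zero t ht, hθ.eq_zero t ht, mul_zero, sub_zero]⟩
  have hfint : ∫ t in a..b, (g t - n * θ t) = 0 := by
    rw [intervalIntegral.integral_sub (hgc.intervalIntegrable _ _)
      (Continuous.intervalIntegrable (by fun_prop) _ _),
      intervalIntegral.integral_const_mul, hθ1, mul_one, sub_self]
  have hzero := h _ (hf.primitive hfint)
  simp only [(hf.contDiff.continuous.integral_hasStrictDerivAt a _).hasDerivAt.deriv, sub_mul,
    mul_assoc] at hzero
  rw [intervalIntegral.integral_sub (Continuous.intervalIntegrable (by fun_prop) _ _)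
    (Continuous.intervalIntegrable (by fun_prop) _ _),
    intervalIntegral.integral_const_mul, sub_eq_zero] at hzero
  rw [hzero, mul_comm]

lemma eq_of_integral_deriv_mul_eq_zero {a b : ℝ} (hab : a < b) {r : ℝ → ℝ} (hr : Continuous r)
    (h : ∀ η, IsTestFunction a b η → ∫ t in a..b, deriv η t * r t = 0) {t : ℝ}
    (ht : t ∈ Icc a b) : r t = r a := by
  obtain ⟨m, hm⟩ := exists_integral_mul_eq_of_integral_deriv_mul_eq_zero hab hr h
  have hae : ∀ᵐ t, t ∈ Ioo a b → r t - m = 0 := by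
    refine isOpen_Ioo.ae_eq_zero_of_integral_contDiff_smul_eq_zero
      ((hr.sub continuous_const).locallyIntegrable.locallyIntegrableOn _) fun g hg _ hgs => ?_
    have hgtest : IsTestFunction a b g :=
      ⟨hg, fun t ht => image_eq_zero_of_notMem_tsupport fun ht' => ht (hgs ht')⟩
    have hgc := hg.continuous
    rw [← intervalIntegral.integral_eq_integral_of_support_subset (a := a) (b := b)]
    · simp only [smul_eq_mul, mul_sub]
      rw [intervalIntegral.integral_sub (Continuous.intervalIntegrable (by fun_prop) _ _)
        (Continuous.intervalIntegrable (by fun_prop) _ _),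
        intervalIntegral.integral_mul_const, hm g hgtest, mul_comm m, sub_self]
    · exact (support_smul_subset_left _ _).trans ((subset_tsupport g).trans
        (hgs.trans Ioo_subset_Ioc_self))
  have hopen : EqOn r (fun _ => m) (Ioo a b) := by
    refine Measure.eqOn_open_of_ae_eq (μ := volume) ?_ isOpen_Ioo hr.continuousOn
      continuousOn_const
    rw [Filter.EventuallyEq, ae_restrict_iff' measurableSet_Ioo]
    filter_upwards [hae] with t ht ht' using sub_eq_zero.1 (ht ht')
  have hclosed : EqOn r (fun _ => m) (Icc a b) := by
    simpa only [closure_Ioo hab.ne] using hopen.closure hr continuous_const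
  rw [hclosed ht, hclosed (left_mem_Icc.2 hab.le)]

lemma eq_primitive_of_weak {a b : ℝ} (hab : a < b) {p q : ℝ → ℝ} (hp : Continuous p)
    (hq : Continuous q)
    (h : ∀ η, IsTestFunction a b η → ∫ t in a..b, (deriv η t * p t + η t * q t) = 0) {t : ℝ}
    (ht : t ∈ Icc a b) : p t = p a + ∫ s in a..t, q s := by
  set Q : ℝ → ℝ := fun t => ∫ s in a..t, q s
  have hQ' : ∀ t, HasDerivAt Q (q t) t := fun t => (hq.integral_hasStrictDerivAt a t).hasDerivAt
  have hQc : Continuous Q := continuous_iff_continuousAt.2 fun t => (hQ' t).continuousAt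
  have hconst : p t - Q t = p a - Q a := by
    refine eq_of_integral_deriv_mul_eq_zero (r := fun t => p t - Q t) hab (hp.sub hQc)
      (fun η hη => ?_) ht
    have hη' : Continuous (deriv η) := hη.contDiff.continuous_deriv (by simp)
    have hηc := hη.contDiff.continuous
    have hparts : ∫ t in a..b, (deriv η t * Q t + η t * q t) = 0 := by
      rw [intervalIntegral.integral_deriv_mul_eq_sub
        (fun t _ => (hη.contDiff.differentiable (by simp) t).hasDerivAt) (fun t _ => hQ' t)
        (hη'.intervalIntegrable _ _) (hq.intervalIntegrable _ _),
        hη.eq_zero a (by simp), hη.eq_zero b (by simp), zero_mul, zero_mul, sub_zero]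
    have hsub : ∀ t, deriv η t * (p t - Q t) =
        (deriv η t * p t + η t * q t) - (deriv η t * Q t + η t * q t) := fun t => by ring
    simp only [hsub]
    rw [intervalIntegral.integral_sub (Continuous.intervalIntegrable (by fun_prop) _ _)
      (Continuous.intervalIntegrable (by fun_prop) _ _), h η hη, hparts, sub_zero]
  have hQa : Q a = 0 := intervalIntegral.integral_same
  rw [hQa, sub_zero] at hconst
  exact sub_eq_iff_eq_add.1 hconst

/-! ### The equation holds pointwise -/

lemma integral_mul_iteratedDeriv {f g : ℝ → ℝ} {p : ℝ} {n : ℕ} (hf : ContDiff ℝ n f)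
    (hg : ContDiff ℝ n g) (pf : Periodic f p) (pg : Periodic g p) :
    ∫ x in (0 : ℝ)..p, f x * ∂[n] g x = (-1) ^ n * ∫ x in (0 : ℝ)..p, ∂[n] f x * g x := by
  induction n generalizing g with
  | zero => simp only [iteratedDeriv_zero, pow_zero, one_mul]
  | succ n ih =>
    have hg' : ContDiff ℝ n (deriv g) := (contDiff_succ_iff_deriv.1 hg).2.2
    have hparts := integral_mul_deriv_of_periodic (periodic_iteratedDeriv pf n) pg
      (hasDerivAt_iteratedDeriv hf n.lt_succ_self)
      (fun x => (hg.differentiable (by simp) x).hasDerivAt)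
      (hf.continuous_iteratedDeriv (n + 1) le_rfl) hg'.continuous
    rw [iteratedDeriv_succ', ih (hf.of_le (mod_cast n.le_succ)) hg' (periodic_deriv pg), hparts,
      pow_succ, mul_neg, mul_neg_one, neg_mul]

lemma eq_zero_of_forall_integral_mul_eq_zero {g : ℝ → ℝ} (hg : Continuous g)
    (hp : Periodic g (2 * π))
    (h : ∀ χ : ℝ → ℝ, ContDiff ℝ (⊤ : ℕ∞) χ → Periodic χ (2 * π) →
      ∫ x in (0 : ℝ)..2 * π, g x * χ x = 0) : g = 0 := by
  have hcos : ∀ k : ℤ, ∫ x in (0 : ℝ)..2 * π, g x * cos (k * x) = 0 := fun k =>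
    h _ (by fun_prop) fun x => by simp only [mul_add, cos_add_int_mul_two_pi]
  have hsin : ∀ k : ℤ, ∫ x in (0 : ℝ)..2 * π, g x * sin (k * x) = 0 := fun k =>
    h _ (by fun_prop) fun x => by simp only [mul_add, sin_add_int_mul_two_pi]
  have hexp : ∀ (k : ℤ) (x : ℝ), (g x : ℂ) * Complex.exp (-Complex.I * k * x) =
      ((g x * cos (k * x) : ℝ) : ℂ) - ((g x * sin (k * x) : ℝ) : ℂ) * Complex.I := by
    intro k x
    have hI : -Complex.I * k * x = ((-(k * x) : ℝ) : ℂ) * Complex.I := by push_cast; ring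
    rw [hI, Complex.exp_mul_I, ← Complex.ofReal_cos, ← Complex.ofReal_sin, cos_neg, sin_neg]
    push_cast
    ring
  have hfc : ∀ k, fc g k = 0 := fun k => by
    simp only [fc, hexp]
    rw [intervalIntegral.integral_sub (Continuous.intervalIntegrable (by fun_prop) _ _)
      (Continuous.intervalIntegrable (by fun_prop) _ _), intervalIntegral.integral_mul_const,
      intervalIntegral.integral_ofReal, intervalIntegral.integral_ofReal, hcos, hsin,
      Complex.ofReal_zero, zero_mul, sub_zero, mul_zero]
  funext x
  have hsum := hasSum_fc_mul_cexp hg hp (funext hfc ▸ summable_zero) x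
  simp only [hfc, zero_mul] at hsum
  exact Complex.ofReal_eq_zero.1 (hsum.unique hasSum_zero)

lemma isTimePrimitive_of_weak {T₁ T₂ : ℝ} {f F : ℝ → ℝ → ℝ} (hf : Continuous (uncurry f))
    (hF : Continuous (uncurry F)) (pf : ∀ t, Periodic (f t) (2 * π))
    (pF : ∀ t, Periodic (F t) (2 * π))
    (h : ∀ χ : ℝ → ℝ, ContDiff ℝ (⊤ : ℕ∞) χ → Periodic χ (2 * π) → ∀ t ∈ Icc T₁ T₂,
      ∫ x in (0 : ℝ)..2 * π, f t x * χ x = (∫ x in (0 : ℝ)..2 * π, f T₁ x * χ x) +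
        ∫ s in T₁..t, ∫ x in (0 : ℝ)..2 * π, F s x * χ x) : IsTimePrimitive T₁ T₂ f F := by
  intro t ht x
  have hcF : Continuous fun x => ∫ s in T₁..t, F s x :=
    continuous_integral_param (f := fun x s => F s x) (hF.comp continuous_swap) T₁ t
  have hft : Continuous (f t) := hf.along_snd
  have hfT : Continuous (f T₁) := hf.along_snd
  suffices hzero : (fun x => f t x - (f T₁ x + ∫ s in T₁..t, F s x)) = 0 from
    sub_eq_zero.1 (congrFun hzero x)
  refine eq_zero_of_forall_integral_mul_eq_zero (hft.sub (hfT.add hcF))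
    (fun y => by simp only [pf _ y, pF _ y]) fun χ hχ pχ => ?_
  have hχc := hχ.continuous
  have hswap : ∫ x in (0 : ℝ)..2 * π, (∫ s in T₁..t, F s x) * χ x =
      ∫ s in T₁..t, ∫ x in (0 : ℝ)..2 * π, F s x * χ x := by
    simp only [← intervalIntegral.integral_mul_const]
    have hFχ : Continuous (uncurry fun x s => F s x * χ x) :=
      (hF.comp continuous_swap).mul (hχc.comp continuous_fst)
    exact intervalIntegral_intervalIntegral_swap
      ((hFχ.continuousOn.integrableOn_compact (isCompact_uIcc.prod isCompact_uIcc)).mono_set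
        (prod_mono uIoc_subset_uIcc uIoc_subset_uIcc))
  simp only [sub_mul, add_mul]
  rw [intervalIntegral.integral_sub (Continuous.intervalIntegrable (by fun_prop) _ _)
    (Continuous.intervalIntegrable (by fun_prop) _ _),
    intervalIntegral.integral_add (Continuous.intervalIntegrable (by fun_prop) _ _)
    (Continuous.intervalIntegrable (by fun_prop) _ _), hswap, h χ hχ pχ t ht, sub_self]

section

variable {γ0 γ1 γ2 : ℝ} {j0 : ℕ} {lam : Fin j0 → ℝ} {a b c d : Fin j0 → ℕ} {T₁ T₂ : ℝ}
  {u v : ℝ → ℝ → ℝ}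

/-- The right-hand side `N(f) - γ₀f⁽⁵⁾ - γ₁f⁽³⁾ - γ₂f'` of the equation solved for `∂_t u`. -/
noncomputable def vectorField (γ0 γ1 γ2 : ℝ) (j0 : ℕ) (lam : Fin j0 → ℝ) (a b c d : Fin j0 → ℕ)
    (f : ℝ → ℝ) (x : ℝ) : ℝ :=
  Nfun j0 lam a b c d f x - (γ0 * ∂[5] f x + γ1 * ∂[3] f x + γ2 * ∂[1] f x)

lemma SpaceC.vectorField {n : ℕ} (hu : SpaceC (n + 5) u) :
    SpaceC n fun t => vectorField γ0 γ1 γ2 j0 lam a b c d (u t) :=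
  have hd : ∀ i ≤ 5, SpaceC n fun t => ∂[i] (u t) := fun i hi => hu.iteratedDeriv (by omega)
  (SpaceC.nfun (hu.mono (by omega)) lam a b c d).sub
    ((((hd 5 le_rfl).const_mul γ0).add ((hd 3 (by norm_num)).const_mul γ1)).add
      ((hd 1 (by norm_num)).const_mul γ2))

lemma IsSolution.congr (hu : IsSolution γ0 γ1 γ2 j0 lam a b c d T₁ T₂ u) (hT : T₁ ≤ T₂)
    (h : ∀ t ∈ Icc T₁ T₂, u t = v t) : IsSolution γ0 γ1 γ2 j0 lam a b c d T₁ T₂ v := by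
  refine ⟨fun t ht => h t ht ▸ hu.1 t ht, fun ψ hψ pψ hψ0 => ?_⟩
  refine (intervalIntegral.integral_congr fun t ht => ?_).trans (hu.2 ψ hψ pψ hψ0)
  rw [uIcc_of_le hT] at ht
  simp only [h t ht]

lemma SpaceC.integral_vectorField_mul (hu : SpaceC 5 u) {χ : ℝ → ℝ} (hχ : ContDiff ℝ (5 : ℕ) χ)
    (pχ : Periodic χ (2 * π)) (t : ℝ) :
    ∫ x in (0 : ℝ)..2 * π, FifthOrderStmt3.vectorField γ0 γ1 γ2 j0 lam a b c d (u t) x * χ x =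
      ∫ x in (0 : ℝ)..2 * π, (u t x * (γ0 * ∂[5] χ x + γ1 * ∂[3] χ x + γ2 * ∂[1] χ x) +
        Nfun j0 lam a b c d (u t) x * χ x) := by
  have cu : ∀ i ≤ 5, Continuous (∂[i] (u t)) := fun i hi =>
    (hu.continuous_iteratedDeriv hi).along_snd
  have cχ : ∀ i ≤ 5, Continuous (∂[i] χ) := fun i hi =>
    hχ.continuous_iteratedDeriv i (mod_cast hi)
  have cu0 : Continuous (u t) := hu.continuous.along_snd
  have cχ0 : Continuous χ := hχ.continuous
  have cN : Continuous (Nfun j0 lam a b c d (u t)) :=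
    (SpaceC.nfun (n := 0) (hu.mono (by norm_num)) lam a b c d).continuous.along_snd
  have hparts : ∀ i ≤ 5, Odd i → ∫ x in (0 : ℝ)..2 * π, u t x * ∂[i] χ x =
      ∫ x in (0 : ℝ)..2 * π, -(∂[i] (u t) x * χ x) := fun i hi hodd => by
    rw [integral_mul_iteratedDeriv ((hu.contDiff t).of_le (mod_cast hi))
      (hχ.of_le (mod_cast hi)) (hu.periodic t) pχ, hodd.neg_one_pow, neg_one_mul,
      intervalIntegral.integral_neg]
  have hlin : ∀ p : ℕ → ℝ → ℝ, (∀ i ≤ 5, Continuous (p i)) →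
      ∫ x in (0 : ℝ)..2 * π, (γ0 * p 5 x + γ1 * p 3 x + γ2 * p 1 x +
        Nfun j0 lam a b c d (u t) x * χ x) =
        γ0 * (∫ x in (0 : ℝ)..2 * π, p 5 x) + γ1 * (∫ x in (0 : ℝ)..2 * π, p 3 x) +
        γ2 * (∫ x in (0 : ℝ)..2 * π, p 1 x) +
        ∫ x in (0 : ℝ)..2 * π, Nfun j0 lam a b c d (u t) x * χ x := by
    intro p cp
    have cp1 := cp 1 (by norm_num)
    have cp3 := cp 3 (by norm_num)
    have cp5 := cp 5 le_rfl
    rw [intervalIntegral.integral_add, intervalIntegral.integral_add,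
      intervalIntegral.integral_add]
    · simp only [intervalIntegral.integral_const_mul]
    all_goals exact Continuous.intervalIntegrable (by fun_prop) _ _
  have hu := hlin (fun i x => -(∂[i] (u t) x * χ x)) fun i hi => ((cu i hi).mul cχ0).neg
  have hχ := hlin (fun i x => u t x * ∂[i] χ x) fun i hi => cu0.mul (cχ i hi)
  rw [hparts 5 (by norm_num) (by decide), hparts 3 (by norm_num) (by decide),
    hparts 1 (by norm_num) (by decide), ← hu] at hχ
  refine (intervalIntegral.integral_congr fun x _ => ?_).trans
    (hχ.symm.trans (intervalIntegral.integral_congr fun x _ => ?_))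
  · simp only [FifthOrderStmt3.vectorField]
    ring
  · ring

lemma IsSolution.integral_mul_eq (hu : IsSolution γ0 γ1 γ2 j0 lam a b c d T₁ T₂ u)
    (hT : T₁ < T₂) (hreg : SpaceC 5 u) {χ : ℝ → ℝ} (hχ : ContDiff ℝ (⊤ : ℕ∞) χ)
    (pχ : Periodic χ (2 * π)) {t : ℝ} (ht : t ∈ Icc T₁ T₂) :
    ∫ x in (0 : ℝ)..2 * π, u t x * χ x = (∫ x in (0 : ℝ)..2 * π, u T₁ x * χ x) +
      ∫ s in T₁..t, ∫ x in (0 : ℝ)..2 * π, vectorField γ0 γ1 γ2 j0 lam a b c d (u s) x * χ x := by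
  have hχc : Continuous fun p : ℝ × ℝ => χ p.2 := hχ.continuous.comp continuous_snd
  have hV : Continuous (uncurry fun t => vectorField γ0 γ1 γ2 j0 lam a b c d (u t)) :=
    (hreg.vectorField (n := 0)).continuous
  refine eq_primitive_of_weak hT (p := fun t => ∫ x in (0 : ℝ)..2 * π, u t x * χ x)
    (continuous_integral_param (f := fun t x => u t x * χ x) (hreg.continuous.mul hχc) _ _)
    (continuous_integral_param
      (f := fun t x => vectorField γ0 γ1 γ2 j0 lam a b c d (u t) x * χ x) (hV.mul hχc) _ _)
    (fun η hη => ?_) ht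
  refine (intervalIntegral.integral_congr fun t _ => ?_).trans (hu.2 (fun t x => η t * χ x)
    ((hη.contDiff.comp contDiff_fst).mul (hχ.comp contDiff_snd))
    (fun t x => by simp only [pχ x]) fun t ht x => by rw [hη.eq_zero t ht, zero_mul])
  have hχn : ∀ n : ℕ, ContDiff ℝ n χ := fun n => hχ.of_le (mod_cast le_top)
  have hderiv : ∀ (n : ℕ) x, ∂[n] (fun x => η t * χ x) x = η t * ∂[n] χ x := fun n x =>
    iteratedDeriv_const_mul _ (hχn n).contDiffAt
  have hderiv_time : ∀ x, deriv (fun τ => η τ * χ x) t = deriv η t * χ x := fun x =>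
    deriv_mul_const (hη.contDiff.differentiable (by simp) t) _
  have cu : Continuous (u t) := hreg.continuous.along_snd
  have cN : Continuous (Nfun j0 lam a b c d (u t)) :=
    (SpaceC.nfun (n := 0) (hreg.mono (by norm_num)) lam a b c d).continuous.along_snd
  have cχ0 : Continuous χ := hχ.continuous
  simp only [← iteratedDeriv_one, hderiv, hderiv_time, hreg.integral_vectorField_mul (hχn 5) pχ t]
  rw [iteratedDeriv_one, ← intervalIntegral.integral_const_mul,
    ← intervalIntegral.integral_const_mul, ← intervalIntegral.integral_add]
  · exact intervalIntegral.integral_congr fun x _ => by ring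
  all_goals exact Continuous.intervalIntegrable (by fun_prop) _ _

lemma IsSolution.isTimePrimitive (hu : IsSolution γ0 γ1 γ2 j0 lam a b c d T₁ T₂ u)
    (hT : T₁ < T₂) (hreg : SpaceC 5 u) :
    IsTimePrimitive T₁ T₂ u fun t => vectorField γ0 γ1 γ2 j0 lam a b c d (u t) :=
  isTimePrimitive_of_weak hreg.continuous (hreg.vectorField (n := 0)).continuous hreg.periodic
    (hreg.vectorField (n := 0)).periodic fun _ hχ pχ _ ht => hu.integral_mul_eq hT hreg hχ pχ ht

end

/-! ### Exact functions -/

/-- `q` is the derivative of a `2π`-periodic function, so that its integral over a period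
vanishes. -/
def IsExact (q : ℝ → ℝ) : Prop := ∃ Q : ℝ → ℝ, Periodic Q (2 * π) ∧ ∀ x, HasDerivAt Q (q x) x

namespace IsExact

variable {p q : ℝ → ℝ}

lemma add (hp : IsExact p) (hq : IsExact q) : IsExact fun x => p x + q x :=
  let ⟨P, pP, hP⟩ := hp
  let ⟨Q, pQ, hQ⟩ := hq
  ⟨fun x => P x + Q x, pP.add pQ, fun x => (hP x).add (hQ x)⟩

lemma const_mul (c : ℝ) (hq : IsExact q) : IsExact fun x => c * q x :=
  let ⟨Q, pQ, hQ⟩ := hq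
  ⟨fun x => c * Q x, fun x => by simp only [pQ x], fun x => (hQ x).const_mul c⟩

lemma congr (hq : IsExact q) (h : ∀ x, q x = p x) : IsExact p := funext h ▸ hq

lemma integral_eq_zero (hq : IsExact q) (cq : Continuous q) :
    ∫ x in (0 : ℝ)..2 * π, q x = 0 := by
  obtain ⟨Q, pQ, hQ⟩ := hq
  rw [intervalIntegral.integral_eq_sub_of_hasDerivAt (fun x _ => hQ x) (cq.intervalIntegrable _ _),
    ← zero_add (2 * π), pQ 0, sub_self]

end IsExact

/-- `f 0, …, f n` are the successive derivatives of the `2π`-periodic function `f 0`. -/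
structure IsPeriodicJet (n : ℕ) (f : ℕ → ℝ → ℝ) : Prop where
  periodic (i : ℕ) : Periodic (f i) (2 * π)
  hasDerivAt {i : ℕ} (hi : i < n) (x : ℝ) : HasDerivAt (f i) (f (i + 1) x) x

lemma SpaceC.isPeriodicJet {n : ℕ} {f : ℝ → ℝ → ℝ} (hf : SpaceC n f) (t : ℝ) :
    IsPeriodicJet n fun i => ∂[i] (f t) where
  periodic := periodic_iteratedDeriv (hf.periodic t)
  hasDerivAt hi := hf.hasDerivAt_iteratedDeriv hi t

section

variable {m n : ℕ} {f g : ℕ → ℝ → ℝ}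

lemma IsExact.mul (hf : IsPeriodicJet m f) (hg : IsPeriodicJet n g) {i j : ℕ} (hi : i < m)
    (hj : j < n) : IsExact fun x => f (i + 1) x * g j x + f i x * g (j + 1) x :=
  ⟨fun x => f i x * g j x, (hf.periodic i).mul (hg.periodic j),
    fun x => (hf.hasDerivAt hi x).mul (hg.hasDerivAt hj x)⟩

lemma IsExact.mul_mul (hg : IsPeriodicJet m g) (hf : IsPeriodicJet n f) {i j k : ℕ} (hi : i < m)
    (hj : j < n) (hk : k < n) : IsExact fun x => g (i + 1) x * f j x * f k x +
      g i x * f (j + 1) x * f k x + g i x * f j x * f (k + 1) x :=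
  ⟨fun x => g i x * f j x * f k x, ((hg.periodic i).mul (hf.periodic j)).mul (hf.periodic k),
    fun x => (((hg.hasDerivAt hi x).mul (hf.hasDerivAt hj x)).mul
      (hf.hasDerivAt hk x)).congr_deriv (by rw [Pi.mul_apply]; ring)⟩

lemma isExact_mul_fifth (hf : IsPeriodicJet 5 f) : IsExact fun x => f 0 x * f 5 x :=
  (((IsExact.mul hf hf (i := 0) (j := 4) (by norm_num) (by norm_num)).add
    ((IsExact.mul hf hf (i := 1) (j := 3) (by norm_num) (by norm_num)).const_mul (-1))).add
    ((IsExact.mul hf hf (i := 2) (j := 2) (by norm_num) (by norm_num)).const_mul (1 / 2))).congr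
    fun x => by ring

lemma isExact_weight_mul_second (hg : IsPeriodicJet 1 g) (hf : IsPeriodicJet 2 f) :
    IsExact fun x => g 0 x * f 0 x * f 2 x + g 0 x * f 1 x ^ 2 + g 1 x * f 0 x * f 1 x :=
  (IsExact.mul_mul hg hf (i := 0) (j := 0) (k := 1) (by norm_num) (by norm_num)
    (by norm_num)).congr fun x => by ring

lemma isExact_weight_mul_third (hg : IsPeriodicJet 2 g) (hf : IsPeriodicJet 3 f) :
    IsExact fun x =>
      2 * g 0 x * f 0 x * f 3 x - 3 * g 1 x * f 1 x ^ 2 - 2 * g 2 x * f 0 x * f 1 x := by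
  have h (i j k : ℕ) (hi : i < 2 := by norm_num) (hj : j < 3 := by norm_num)
      (hk : k < 3 := by norm_num) := IsExact.mul_mul hg hf hi hj hk
  exact ((((h 0 0 2).const_mul 2).add ((h 0 1 1).const_mul (-1))).add
    ((h 1 0 1).const_mul (-2))).congr fun x => by ring

lemma isExact_weight_mul_fifth (hg : IsPeriodicJet 4 g) (hf : IsPeriodicJet 5 f) :
    IsExact fun x => 2 * g 0 x * f 0 x * f 5 x + 5 * g 1 x * f 2 x ^ 2 -
      5 * g 3 x * f 1 x ^ 2 - 2 * g 4 x * f 0 x * f 1 x := by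
  have h (i j k : ℕ) (hi : i < 4 := by norm_num) (hj : j < 5 := by norm_num)
      (hk : k < 5 := by norm_num) := IsExact.mul_mul hg hf hi hj hk
  exact ((((((((h 0 0 4).const_mul 2).add ((h 0 1 3).const_mul (-2))).add (h 0 2 2)).add
    ((h 1 0 3).const_mul (-2))).add ((h 1 1 2).const_mul 4)).add ((h 2 0 2).const_mul 2)).add
    ((h 2 1 1).const_mul (-3))).add ((h 3 0 1).const_mul (-2)) |>.congr fun x => by ring

end

lemma isExact_energyRate_sub {γ0 : ℝ} {w H G P A C D Δ : ℕ → ℝ → ℝ} {B Ht : ℝ → ℝ}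
    (hw : IsPeriodicJet 6 w) (hH : IsPeriodicJet 4 H) (hG : IsPeriodicJet 2 G)
    (hP : IsPeriodicJet 1 P) (hA : IsPeriodicJet 1 A) (hC : IsPeriodicJet 1 C)
    (hD : IsPeriodicJet 1 D) (hΔ : IsPeriodicJet 1 Δ) (hGA : ∀ x, G 0 x = H 0 x * A 0 x)
    (hPB : ∀ x, P 0 x = H 0 x * B x) :
    IsExact fun x =>
      (2 * w 1 x * (Δ 1 x - γ0 * w 6 x) + Ht x * w 0 x ^ 2 +
        2 * H 0 x * w 0 x * (Δ 0 x - γ0 * w 5 x)) -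
      ((5 * γ0 * H 1 x + A 1 x - 2 * B x) * w 2 x ^ 2 +
        (C 1 x + 2 * D 0 x + 3 * G 1 x - 2 * P 0 x - 5 * γ0 * H 3 x) * w 1 x ^ 2 +
        (2 * D 1 x + 2 * G 2 x - 2 * P 1 x + 2 * H 0 x * C 0 x - 2 * γ0 * H 4 x) *
          (w 0 x * w 1 x) +
        (2 * H 0 x * D 0 x + Ht x) * w 0 x ^ 2 +
        (Δ 0 x - (A 0 x * w 3 x + B x * w 2 x + C 0 x * w 1 x + D 0 x * w 0 x)) *
          (2 * H 0 x * w 0 x - 2 * w 2 x)) := by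
  have hw' : IsPeriodicJet 5 fun i => w (i + 1) :=
    ⟨fun i => hw.periodic (i + 1), fun hi => hw.hasDerivAt (Nat.succ_lt_succ hi)⟩
  have hmono : ∀ n ≤ 6, IsPeriodicJet n w := fun n hn =>
    ⟨hw.periodic, fun hi => hw.hasDerivAt (hi.trans_le hn)⟩
  have hwΔ := (IsExact.mul hw hΔ (i := 1) (j := 0) (by norm_num) (by norm_num)).const_mul 2
  have hw1 := (isExact_mul_fifth hw').const_mul (-2 * γ0)
  have hA2 := (IsExact.mul_mul hA hw (i := 0) (j := 2) (k := 2) (by norm_num) (by norm_num)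
    (by norm_num)).const_mul (-1)
  have hC1 := (IsExact.mul_mul hC hw (i := 0) (j := 1) (k := 1) (by norm_num) (by norm_num)
    (by norm_num)).const_mul (-1)
  have hD0 := (isExact_weight_mul_second hD (hmono 2 (by norm_num))).const_mul (-2)
  have hG0 := isExact_weight_mul_third hG (hmono 3 (by norm_num))
  have hP0 := (isExact_weight_mul_second hP (hmono 2 (by norm_num))).const_mul 2
  have hH0 := (isExact_weight_mul_fifth hH (hmono 5 (by norm_num))).const_mul (-γ0)
  refine (((((((hwΔ.add hw1).add hA2).add hC1).add hD0).add hG0).add hP0).add hH0).congr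
    fun x => ?_
  linear_combination (2 * w 0 x * w 3 x) * hGA x + (2 * w 0 x * w 2 x) * hPB x

/-! ### The modified energy -/

section

variable {γ0 T₁ T₂ : ℝ} {w Δ A B C D H H' : ℝ → ℝ → ℝ}

lemma exists_primitive_sub_mean {I : Set ℝ} (hI : IsOpen I) {n : ℕ} {f : ℝ → ℝ → ℝ}
    (hf : SpaceC n f) (tf : TimeC1 I f) : ∃ F, SpaceC (n + 1) F ∧ TimeC1 I F ∧
      ∀ t x, HasDerivAt (F t) (f t x - 1 / (2 * π) * ∫ y in (0 : ℝ)..2 * π, f t y) x := by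
  have hcont (t : ℝ) : Continuous (f t) := hf.continuous.along_snd
  have hmean : SpaceC n fun t _ => 1 / (2 * π) * ∫ y in (0 : ℝ)..2 * π, f t y :=
    SpaceC.of_time (continuous_const.mul (continuous_integral_param hf.continuous _ _))
  have tF : TimeC1 I fun t x =>
      (∫ y in (0 : ℝ)..x, f t y) - x * (1 / (2 * π) * ∫ y in (0 : ℝ)..2 * π, f t y) :=
    (tf.primitive hI 0).sub
      ((TimeC1.of_space continuous_id).mul ((tf.integral hI 0 (2 * π)).const_mul _))
  have hderiv : ∀ t x, HasDerivAt
      (fun x => (∫ y in (0 : ℝ)..x, f t y) - x * (1 / (2 * π) * ∫ y in (0 : ℝ)..2 * π, f t y))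
      (f t x - 1 / (2 * π) * ∫ y in (0 : ℝ)..2 * π, f t y) x := fun t x =>
    (((hcont t).integral_hasStrictDerivAt 0 x).hasDerivAt.sub
      ((hasDerivAt_id x).mul_const _)).congr_deriv (by rw [one_mul])
  refine ⟨_, SpaceC.of_hasDerivAt tF.continuous (fun t x => ?_) (hf.sub hmean) hderiv, tF, hderiv⟩
  have hint : ∫ y in (0 : ℝ)..x + 2 * π, f t y =
      (∫ y in (0 : ℝ)..x, f t y) + ∫ y in (0 : ℝ)..2 * π, f t y := by
    rw [← intervalIntegral.integral_add_adjacent_intervals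
      ((hcont t).intervalIntegrable 0 x) ((hcont t).intervalIntegrable x _),
      (hf.periodic t).intervalIntegral_add_eq x 0, zero_add]
  simp only [hint]
  field_simp
  ring

/-- The region `[T₁, T₂] × [0, 2π]`, on which continuous functions are bounded. -/
def slab (T₁ T₂ : ℝ) : Set (ℝ × ℝ) := Icc T₁ T₂ ×ˢ Icc 0 (2 * π)

lemma isBigO_one_of_continuous {f : ℝ → ℝ → ℝ} (hf : Continuous (uncurry f)) :
    uncurry f =O[𝓟 (slab T₁ T₂)] fun _ => (1 : ℝ) :=
  hf.continuousOn.isBigO_principal (isCompact_Icc.prod isCompact_Icc) (c := (1 : ℝ))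
    (by norm_num)

/-- A weight `H` for the modified energy `∫ (∂ₓw)² + H w²`. It removes the non-constant part of
the coefficient `∂ₓA - 2B` with which `(∂ₓ²w)²` enters the energy balance. -/
structure IsWeight (γ0 T₁ T₂ : ℝ) (A B H : ℝ → ℝ → ℝ) : Prop where
  spaceC : SpaceC 4 H
  timeC1 : TimeC1 (Ioo T₁ T₂) H
  one_le : ∀ p ∈ slab T₁ T₂, 1 ≤ H p.1 p.2
  deriv_eq (t x : ℝ) : 5 * γ0 * ∂[1] (H t) x + ∂[1] (A t) x - 2 * B t x =
    -(1 / π) * ∫ y in (0 : ℝ)..2 * π, B t y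

lemma exists_isWeight (hγ0 : γ0 ≠ 0) (hA : SpaceC 4 A) (hB : SpaceC 3 B)
    (tA : TimeC1 (Ioo T₁ T₂) A) (tB : TimeC1 (Ioo T₁ T₂) B) : ∃ H, IsWeight γ0 T₁ T₂ A B H := by
  obtain ⟨F, hF, tF, hderiv⟩ := exists_primitive_sub_mean isOpen_Ioo hB tB
  let K : ℝ → ℝ → ℝ := fun t x => 1 / (5 * γ0) * (2 * F t x - A t x)
  have hKreg : SpaceC 4 K := ((hF.const_mul 2).sub hA).const_mul _
  obtain ⟨k, hk⟩ := isBigO_principal.1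
    (isBigO_one_of_continuous (T₁ := T₁) (T₂ := T₂) hKreg.continuous)
  refine ⟨fun t x => K t x + (k + 1), hKreg.add (SpaceC.of_time continuous_const),
    (((tF.const_mul 2).sub tA).const_mul _).add (TimeC1.of_space continuous_const),
    fun p hp => ?_, fun t x => ?_⟩
  · have hkp := hk p hp
    rw [norm_one, mul_one] at hkp
    have hneg : -k ≤ K p.1 p.2 := neg_le_of_abs_le hkp
    linarith
  · have hA' := hA.hasDerivAt_iteratedDeriv (i := 0) (by norm_num) t x
    rw [iteratedDeriv_zero] at hA'
    have hH' : HasDerivAt (fun x => K t x + (k + 1)) _ x :=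
      ((((hderiv t x).const_mul 2).sub hA').const_mul (1 / (5 * γ0))).add_const (k + 1)
    rw [iteratedDeriv_one (f := fun x => K t x + (k + 1)), hH'.deriv, zero_add]
    field_simp
    ring

/-- The sum `|w| + |∂ₓw| + |∂ₓ²w| + |∂ₓ³w|`. -/
noncomputable def size (w : ℝ → ℝ → ℝ) (t x : ℝ) : ℝ := ∑ i ∈ Finset.range 4, |∂[i] (w t) x|

lemma size_nonneg (w : ℝ → ℝ → ℝ) (t x : ℝ) : 0 ≤ size w t x :=
  Finset.sum_nonneg fun _ _ => abs_nonneg _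

lemma abs_iteratedDeriv_le_size (w : ℝ → ℝ → ℝ) {i : ℕ} (hi : i < 4) (t x : ℝ) :
    |∂[i] (w t) x| ≤ size w t x :=
  Finset.single_le_sum (f := fun i => |∂[i] (w t) x|) (fun _ _ => abs_nonneg _)
    (Finset.mem_range.2 hi)

/-- The error committed in replacing `Δ` by `A ∂ₓ³w + B ∂ₓ²w + C ∂ₓw + D w`. -/
noncomputable def linearizationError (w Δ A B C D : ℝ → ℝ → ℝ) (t x : ℝ) : ℝ :=
  Δ t x - (A t x * ∂[3] (w t) x + B t x * ∂[2] (w t) x + C t x * ∂[1] (w t) x + D t x * w t x)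

/-- `w` solves `∂_t w + γ₀∂ₓ⁵w = Δ`, where
`Δ = A ∂ₓ³w + B ∂ₓ²w + C ∂ₓw + D w` up to an error quadratic in `w`. -/
structure IsLinearizedSolution (γ0 T₁ T₂ : ℝ) (w Δ A B C D : ℝ → ℝ → ℝ) : Prop where
  spaceC : SpaceC 6 w
  spaceC_rhs : SpaceC 1 Δ
  spaceC_A : SpaceC 4 A
  spaceC_B : SpaceC 3 B
  spaceC_C : SpaceC 1 C
  spaceC_D : SpaceC 1 D
  timeC1_A : TimeC1 (Ioo T₁ T₂) A
  timeC1_B : TimeC1 (Ioo T₁ T₂) B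
  isTimePrimitive : IsTimePrimitive T₁ T₂ w fun t x => Δ t x - γ0 * ∂[5] (w t) x
  isBigO_error : uncurry (linearizationError w Δ A B C D) =O[𝓟 (slab T₁ T₂)]
    fun p => size w p.1 p.2 ^ 2

/-- The density `(∂ₓw)² + H w²` of the modified energy. -/
noncomputable def energyDensity (H w : ℝ → ℝ → ℝ) (t x : ℝ) : ℝ :=
  ∂[1] (w t) x ^ 2 + H t x * w t x ^ 2

lemma continuous_energyDensity (hH : Continuous (uncurry H)) (hw : SpaceC 1 w) :
    Continuous (uncurry (energyDensity H w)) :=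
  ((hw.continuous_iteratedDeriv le_rfl).pow 2).add (hH.mul (hw.continuous.pow 2))

/-- The modified energy `∫ (∂ₓw)² + H w²`. -/
noncomputable def modifiedEnergy (H w : ℝ → ℝ → ℝ) (t : ℝ) : ℝ :=
  ∫ x in (0 : ℝ)..2 * π, energyDensity H w t x

lemma IsWeight.energy_le_modifiedEnergy (hH : IsWeight γ0 T₁ T₂ A B H) (hw : SpaceC 1 w) {t : ℝ}
    (ht : t ∈ Icc T₁ T₂) : energy w t ≤ modifiedEnergy H w t := by
  have cw : Continuous (w t) := hw.continuous.along_snd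
  have cw1 : Continuous (∂[1] (w t)) := (hw.continuous_iteratedDeriv le_rfl).along_snd
  refine intervalIntegral.integral_mono_on two_pi_pos.le
    (Continuous.intervalIntegrable (by fun_prop) _ _)
    ((continuous_energyDensity hH.timeC1.continuous hw).along_snd.intervalIntegrable _ _)
    fun x hx => ?_
  rw [add_comm, energyDensity]
  gcongr
  exact le_mul_of_one_le_left (sq_nonneg _) (hH.one_le (t, x) ⟨ht, hx⟩)

/-- The time derivative of `(∂ₓw)² + H w²` when `∂_t H = H'` and `∂_t w = Δ - γ₀∂ₓ⁵w`. -/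
noncomputable def energyRate (γ0 : ℝ) (w Δ H H' : ℝ → ℝ → ℝ) (t x : ℝ) : ℝ :=
  2 * ∂[1] (w t) x * (∂[1] (Δ t) x - γ0 * ∂[6] (w t) x) + H' t x * w t x ^ 2 +
    2 * H t x * w t x * (Δ t x - γ0 * ∂[5] (w t) x)

namespace IsLinearizedSolution

lemma continuous_energyRate (h : IsLinearizedSolution γ0 T₁ T₂ w Δ A B C D)
    (cH : Continuous (uncurry H)) (cH' : Continuous (uncurry H')) :
    Continuous (uncurry (energyRate γ0 w Δ H H')) := by
  have cw {i : ℕ} (hi : i ≤ 6 := by norm_num) := h.spaceC.continuous_iteratedDeriv hi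
  have cw0 := h.spaceC.continuous
  have cΔ1 := h.spaceC_rhs.continuous_iteratedDeriv le_rfl
  exact (((continuous_const.mul cw).mul (cΔ1.sub (continuous_const.mul cw))).add
    (cH'.mul (cw0.pow 2))).add (((continuous_const.mul cH).mul cw0).mul
      (h.spaceC_rhs.continuous.sub (continuous_const.mul cw)))

lemma hasDerivAt_modifiedEnergy (h : IsLinearizedSolution γ0 T₁ T₂ w Δ A B C D)
    (cH : Continuous (uncurry H)) (cH' : Continuous (uncurry H'))
    (hH' : ∀ t ∈ Ioo T₁ T₂, ∀ x, HasDerivAt (fun τ => H τ x) (H' t x) t) {t : ℝ}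
    (ht : t ∈ Ioo T₁ T₂) :
    HasDerivAt (modifiedEnergy H w) (∫ x in (0 : ℝ)..2 * π, energyRate γ0 w Δ H H' t x) t := by
  have hrhs : SpaceC 1 fun t x => Δ t x - γ0 * ∂[5] (w t) x :=
    h.spaceC_rhs.sub ((h.spaceC.iteratedDeriv (i := 5) (j := 1) le_rfl).const_mul γ0)
  have hrhs' : ∀ t x, ∂[1] (fun x => Δ t x - γ0 * ∂[5] (w t) x) x =
      ∂[1] (Δ t) x - γ0 * ∂[6] (w t) x := fun t x => by
    have hΔ' := h.spaceC_rhs.hasDerivAt_iteratedDeriv zero_lt_one t x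
    rw [iteratedDeriv_zero] at hΔ'
    rw [iteratedDeriv_one]
    exact (hΔ'.sub ((h.spaceC.hasDerivAt_iteratedDeriv (by norm_num) t x).const_mul γ0)).deriv
  refine hasDerivAt_integral_param isOpen_Ioo
    (continuous_energyDensity cH (h.spaceC.mono (by norm_num)))
    (h.continuous_energyRate cH cH') (fun t ht x => ?_) _ _ ht
  have hw0 := h.isTimePrimitive.hasDerivAt hrhs.continuous ht x
  have hw1 := (h.isTimePrimitive.iteratedDeriv (h.spaceC.mono (by norm_num)) hrhs
    le_rfl).hasDerivAt (hrhs.continuous_iteratedDeriv le_rfl) ht x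
  rw [hrhs'] at hw1
  refine ((hw1.pow 2).add ((hH' t ht x).mul (hw0.pow 2))).congr_deriv ?_
  simp only [energyRate, Pi.pow_apply]
  ring

end IsLinearizedSolution

end

section

variable {γ0 T₁ T₂ : ℝ} {w Δ A B C D H H' q₁ q₀₁ q₀ : ℝ → ℝ → ℝ}

/-- `w² + (∂ₓw)²` plus its integral over a period, a majorant for all terms of `reducedRate` except
the one in `(∂ₓ²w)²`. -/
noncomputable def energyBound (w : ℝ → ℝ → ℝ) (t x : ℝ) : ℝ :=
  w t x ^ 2 + ∂[1] (w t) x ^ 2 + energy w t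

lemma isBigO_energyBound {f : ℝ → ℝ → ℝ}
    (hf : ∀ t x, |f t x| ≤ w t x ^ 2 + ∂[1] (w t) x ^ 2) :
    uncurry f =O[𝓟 (slab T₁ T₂)] uncurry (energyBound w) :=
  .of_bound' (.of_forall fun p => (hf p.1 p.2).trans
    ((le_add_of_nonneg_right (energy_nonneg w p.1)).trans (le_abs_self _)))

lemma integral_energyBound (hw : SpaceC 1 w) (t : ℝ) :
    ∫ x in (0 : ℝ)..2 * π, energyBound w t x = (1 + 2 * π) * energy w t := by
  have cw : Continuous (w t) := hw.continuous.along_snd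
  have cw1 : Continuous (∂[1] (w t)) := (hw.continuous_iteratedDeriv le_rfl).along_snd
  simp only [energyBound]
  rw [intervalIntegral.integral_add (Continuous.intervalIntegrable (by fun_prop) _ _)
    (continuous_const.intervalIntegrable _ _), intervalIntegral.integral_const, ← energy,
    smul_eq_mul, sub_zero]
  ring

/-- The form to which `energyRate` is brought by integrating by parts. -/
noncomputable def reducedRate (γ0 : ℝ) (w Δ A B C D H q₁ q₀₁ q₀ : ℝ → ℝ → ℝ) (t x : ℝ) : ℝ :=
  (5 * γ0 * ∂[1] (H t) x + ∂[1] (A t) x - 2 * B t x) * ∂[2] (w t) x ^ 2 +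
    q₁ t x * ∂[1] (w t) x ^ 2 + q₀₁ t x * (w t x * ∂[1] (w t) x) + q₀ t x * w t x ^ 2 +
    linearizationError w Δ A B C D t x * (2 * H t x * w t x - 2 * ∂[2] (w t) x)

namespace IsLinearizedSolution

lemma continuous_reducedRate (h : IsLinearizedSolution γ0 T₁ T₂ w Δ A B C D) (hH : SpaceC 4 H)
    (c₁ : Continuous (uncurry q₁)) (c₀₁ : Continuous (uncurry q₀₁))
    (c₀ : Continuous (uncurry q₀)) :
    Continuous (uncurry (reducedRate γ0 w Δ A B C D H q₁ q₀₁ q₀)) := by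
  have cw0 := h.spaceC.continuous
  have cw1 := h.spaceC.continuous_iteratedDeriv (i := 1) (by norm_num)
  have cw2 := h.spaceC.continuous_iteratedDeriv (i := 2) (by norm_num)
  have cw3 := h.spaceC.continuous_iteratedDeriv (i := 3) (by norm_num)
  have cH1 := hH.continuous_iteratedDeriv (i := 1) (by norm_num)
  have cA1 := h.spaceC_A.continuous_iteratedDeriv (i := 1) (by norm_num)
  have cH := hH.continuous
  have cA := h.spaceC_A.continuous
  have cB := h.spaceC_B.continuous
  have cC := h.spaceC_C.continuous
  have cD := h.spaceC_D.continuous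
  have cΔ := h.spaceC_rhs.continuous
  simp only [uncurry_def] at *
  simp only [reducedRate, linearizationError]
  fun_prop

lemma exists_integral_energyRate_eq (h : IsLinearizedSolution γ0 T₁ T₂ w Δ A B C D)
    (hH : SpaceC 4 H) (cH' : Continuous (uncurry H')) :
    ∃ q₁ q₀₁ q₀ : ℝ → ℝ → ℝ, Continuous (uncurry q₁) ∧ Continuous (uncurry q₀₁) ∧
      Continuous (uncurry q₀) ∧ ∀ t, ∫ x in (0 : ℝ)..2 * π, energyRate γ0 w Δ H H' t x =
        ∫ x in (0 : ℝ)..2 * π, reducedRate γ0 w Δ A B C D H q₁ q₀₁ q₀ t x := by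
  have hHA : SpaceC 2 fun t x => H t x * A t x :=
    (hH.mono (by norm_num)).mul (h.spaceC_A.mono (by norm_num))
  have hHB : SpaceC 1 fun t x => H t x * B t x :=
    (hH.mono (by norm_num)).mul (h.spaceC_B.mono (by norm_num))
  have hd {n : ℕ} {f : ℝ → ℝ → ℝ} (hf : SpaceC n f) (i : ℕ) (hi : i ≤ n := by norm_num) :
      SpaceC 0 fun t => ∂[i] (f t) := hf.iteratedDeriv hi
  have h₁ := ((((hd h.spaceC_C 1).add ((hd h.spaceC_D 0).const_mul 2)).add
    ((hd hHA 1).const_mul 3)).sub ((hd hHB 0).const_mul 2)).sub ((hd hH 3).const_mul (5 * γ0))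
  have h₀₁ := (((((hd h.spaceC_D 1).const_mul 2).add ((hd hHA 2).const_mul 2)).sub
    ((hd hHB 1).const_mul 2)).add (((hd hH 0).const_mul 2).mul (hd h.spaceC_C 0))).sub
    ((hd hH 4).const_mul (2 * γ0))
  have c₀ : Continuous (uncurry fun t x => 2 * ∂[0] (H t) x * ∂[0] (D t) x + H' t x) :=
    (((hd hH 0).const_mul 2).mul (hd h.spaceC_D 0)).continuous.add cH'
  refine ⟨_, _, fun t x => 2 * ∂[0] (H t) x * ∂[0] (D t) x + H' t x, h₁.continuous,
    h₀₁.continuous, c₀, fun t => ?_⟩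
  have cE : Continuous (energyRate γ0 w Δ H H' t) :=
    (h.continuous_energyRate hH.continuous cH').along_snd
  have cR : Continuous (reducedRate γ0 w Δ A B C D H _ _ _ t) :=
    (h.continuous_reducedRate hH h₁.continuous h₀₁.continuous c₀).along_snd
  rw [← sub_eq_zero, ← intervalIntegral.integral_sub (cE.intervalIntegrable _ _)
    (cR.intervalIntegrable _ _)]
  refine IsExact.integral_eq_zero ((isExact_energyRate_sub (γ0 := γ0) (Ht := H' t) (B := B t)
    (h.spaceC.isPeriodicJet t) (hH.isPeriodicJet t) (hHA.isPeriodicJet t) (hHB.isPeriodicJet t)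
    ((h.spaceC_A.mono (by norm_num)).isPeriodicJet t) (h.spaceC_C.isPeriodicJet t)
    (h.spaceC_D.isPeriodicJet t) (h.spaceC_rhs.isPeriodicJet t) (fun x => ?_) fun x => ?_).congr
    fun x => ?_) (cE.sub cR)
  · simp only [iteratedDeriv_zero]
  · simp only [iteratedDeriv_zero]
  · simp only [energyRate, reducedRate, linearizationError, iteratedDeriv_zero]

lemma isBigO_error_mul (h : IsLinearizedSolution γ0 T₁ T₂ w Δ A B C D)
    (hH : Continuous (uncurry H)) {M : ℝ} (hM : ∀ t x, size w t x ^ 3 ≤ M * energy w t) :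
    (fun p : ℝ × ℝ => linearizationError w Δ A B C D p.1 p.2 *
      (2 * H p.1 p.2 * w p.1 p.2 - 2 * ∂[2] (w p.1) p.2))
      =O[𝓟 (slab T₁ T₂)] uncurry (energyBound w) := by
  have hsize {i : ℕ} (hi : i < 4 := by norm_num) :
      (fun p : ℝ × ℝ => ∂[i] (w p.1) p.2) =O[𝓟 (slab T₁ T₂)] fun p => size w p.1 p.2 :=
    .of_bound' (.of_forall fun p => (abs_iteratedDeriv_le_size w hi p.1 p.2).trans
      (le_abs_self _))
  have hcube : (fun p : ℝ × ℝ => size w p.1 p.2 ^ 3) =O[𝓟 (slab T₁ T₂)]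
      fun p => energy w p.1 := .of_bound M <| .of_forall fun p => by
    rw [norm_of_nonneg (pow_nonneg (size_nonneg w _ _) 3), norm_of_nonneg (energy_nonneg w _)]
    exact hM p.1 p.2
  have henergy : (fun p : ℝ × ℝ => energy w p.1) =O[𝓟 (slab T₁ T₂)]
      uncurry (energyBound w) := .of_bound' <| .of_forall fun p => by
    rw [norm_of_nonneg (energy_nonneg w _)]
    exact (le_add_of_nonneg_left (by positivity)).trans (le_abs_self _)
  have hH2 : (fun p : ℝ × ℝ => 2 * H p.1 p.2) =O[𝓟 (slab T₁ T₂)] fun _ => (1 : ℝ) :=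
    (isBigO_one_of_continuous hH).const_mul_left 2
  have hfactor := (hH2.mul (hsize (i := 0))).sub
    (((hsize (i := 2)).const_mul_left 2).congr_right fun p => (one_mul _).symm)
  simp only [iteratedDeriv_zero, one_mul] at hfactor
  exact ((h.isBigO_error.mul hfactor).congr_right fun p => by ring).trans (hcube.trans henergy)

lemma isBigO_reducedRate_sub (h : IsLinearizedSolution γ0 T₁ T₂ w Δ A B C D)
    (hH : Continuous (uncurry H)) (c₁ : Continuous (uncurry q₁)) (c₀₁ : Continuous (uncurry q₀₁))
    (c₀ : Continuous (uncurry q₀)) {M : ℝ} (hM : ∀ t x, size w t x ^ 3 ≤ M * energy w t) :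
    (fun p : ℝ × ℝ => reducedRate γ0 w Δ A B C D H q₁ q₀₁ q₀ p.1 p.2 -
      (5 * γ0 * ∂[1] (H p.1) p.2 + ∂[1] (A p.1) p.2 - 2 * B p.1 p.2) * ∂[2] (w p.1) p.2 ^ 2)
      =O[𝓟 (slab T₁ T₂)] uncurry (energyBound w) := by
  have hmul {q f : ℝ → ℝ → ℝ} (cq : Continuous (uncurry q))
      (hf : ∀ t x, |f t x| ≤ w t x ^ 2 + ∂[1] (w t) x ^ 2) :
      (fun p : ℝ × ℝ => q p.1 p.2 * f p.1 p.2) =O[𝓟 (slab T₁ T₂)] uncurry (energyBound w) :=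
    ((isBigO_one_of_continuous cq).mul (isBigO_energyBound hf)).congr_right fun p => one_mul _
  have hw1 := hmul c₁ (f := fun t x => ∂[1] (w t) x ^ 2) fun t x => by
    rw [abs_sq]
    exact le_add_of_nonneg_left (sq_nonneg _)
  have hw01 := hmul c₀₁ (f := fun t x => w t x * ∂[1] (w t) x) fun t x => by
    rw [abs_le]
    constructor <;> nlinarith [sq_nonneg (w t x + ∂[1] (w t) x), sq_nonneg (w t x - ∂[1] (w t) x)]
  have hw0 := hmul c₀ (f := fun t x => w t x ^ 2) fun t x => by
    rw [abs_sq]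
    exact le_add_of_nonneg_right (sq_nonneg _)
  refine (((hw1.add hw01).add hw0).add (h.isBigO_error_mul hH hM)).congr_left fun p => ?_
  rw [reducedRate]
  ring

lemma exists_integral_energyRate_le (h : IsLinearizedSolution γ0 T₁ T₂ w Δ A B C D)
    (hH : IsWeight γ0 T₁ T₂ A B H) (cH' : Continuous (uncurry H'))
    (hB : ∀ t ∈ Icc T₁ T₂, 0 ≤ ∫ x in (0 : ℝ)..2 * π, B t x) {M : ℝ}
    (hM : ∀ t x, size w t x ^ 3 ≤ M * energy w t) : ∃ K, ∀ t ∈ Icc T₁ T₂,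
      ∫ x in (0 : ℝ)..2 * π, energyRate γ0 w Δ H H' t x ≤ K * modifiedEnergy H w t := by
  obtain ⟨q₁, q₀₁, q₀, c₁, c₀₁, c₀, heq⟩ := h.exists_integral_energyRate_eq hH.spaceC cH'
  obtain ⟨K, hK0, hK⟩ :=
    (h.isBigO_reducedRate_sub hH.spaceC.continuous c₁ c₀₁ c₀ hM).exists_nonneg
  have hw : SpaceC 1 w := h.spaceC.mono (by norm_num)
  have hbound (t : ℝ) : Continuous (energyBound w t) :=
    ((hw.continuous.along_snd.pow 2).add
      ((hw.continuous_iteratedDeriv le_rfl).along_snd.pow 2)).add continuous_const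
  have hrate := h.continuous_reducedRate hH.spaceC c₁ c₀₁ c₀
  refine ⟨K * (1 + 2 * π), fun t ht => ?_⟩
  have hpointwise : ∀ x ∈ Icc 0 (2 * π),
      reducedRate γ0 w Δ A B C D H q₁ q₀₁ q₀ t x ≤ K * energyBound w t x := fun x hx => by
    have hdiff := (le_abs_self _).trans (Filter.eventually_principal.1 hK.bound (t, x) ⟨ht, hx⟩)
    have hpos : 0 ≤ energyBound w t x := add_nonneg (by positivity) (energy_nonneg w t)
    have hdissip : -(1 / π) * (∫ y in (0 : ℝ)..2 * π, B t y) * ∂[2] (w t) x ^ 2 ≤ 0 :=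
      mul_nonpos_of_nonpos_of_nonneg (mul_nonpos_of_nonpos_of_nonneg
        (neg_nonpos.2 (by positivity)) (hB t ht)) (sq_nonneg _)
    rw [hH.deriv_eq, uncurry_apply_pair, norm_of_nonneg hpos] at hdiff
    linarith
  calc ∫ x in (0 : ℝ)..2 * π, energyRate γ0 w Δ H H' t x
      = ∫ x in (0 : ℝ)..2 * π, reducedRate γ0 w Δ A B C D H q₁ q₀₁ q₀ t x := heq t
    _ ≤ ∫ x in (0 : ℝ)..2 * π, K * energyBound w t x :=
        intervalIntegral.integral_mono_on two_pi_pos.le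
          (hrate.along_snd.intervalIntegrable _ _)
          (((hbound t).intervalIntegrable _ _).const_mul K) hpointwise
    _ = K * (1 + 2 * π) * energy w t := by
        rw [intervalIntegral.integral_const_mul, integral_energyBound hw, mul_assoc]
    _ ≤ K * (1 + 2 * π) * modifiedEnergy H w t := by
        gcongr
        exact hH.energy_le_modifiedEnergy hw ht

end IsLinearizedSolution

lemma nonpos_of_deriv_le_mul {K : ℝ} {E E' : ℝ → ℝ} (hE : ContinuousOn E (Icc T₁ T₂))
    (hderiv : ∀ t ∈ Ioo T₁ T₂, HasDerivAt E (E' t) t)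
    (hle : ∀ t ∈ Ioo T₁ T₂, E' t ≤ K * E t) (h0 : E T₁ ≤ 0) : ∀ t ∈ Icc T₁ T₂, E t ≤ 0 := by
  have hexp (s : ℝ) : HasDerivAt (fun s => exp (-K * s)) (exp (-K * s) * (-K * 1)) s :=
    ((hasDerivAt_id s).const_mul (-K)).exp
  have hanti : AntitoneOn (fun s => E s * exp (-K * s)) (Icc T₁ T₂) := by
    refine antitoneOn_of_deriv_nonpos (convex_Icc _ _)
      (hE.mul (Continuous.continuousOn (by fun_prop))) ?_ ?_ <;> rw [interior_Icc]
    · exact fun s hs => ((hderiv s hs).mul (hexp s)).differentiableAt.differentiableWithinAt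
    · intro s hs
      rw [((hderiv s hs).fun_mul (hexp s)).deriv]
      nlinarith [hle s hs, exp_pos (-K * s)]
  intro t ht
  have hle_zero : E t * exp (-K * t) ≤ 0 :=
    (hanti ⟨le_rfl, ht.1.trans ht.2⟩ ht ht.1).trans
      (mul_nonpos_of_nonpos_of_nonneg h0 (exp_pos _).le)
  exact nonpos_of_mul_nonpos_left hle_zero (exp_pos _)

lemma SobolevPath.exists_size_cube_le {s : ℕ} {N : ℝ} (hw : SobolevPath s N w) (hs : 11 ≤ s) :
    ∃ M, ∀ t x, size w t x ^ 3 ≤ M * energy w t := by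
  have hderiv : ∀ i, ∃ K, i ∈ Finset.range 4 → ∀ t x, |∂[i] (w t) x| ^ 3 ≤ K * energy w t :=
    fun i => by
      by_cases hi : i ∈ Finset.range 4
      · obtain ⟨K, hK⟩ := hw.exists_abs_iteratedDeriv_cube_le (i := i) (by omega)
          (by have := Finset.mem_range.1 hi; omega)
        exact ⟨K, fun _ => hK⟩
      · exact ⟨0, fun h => (hi h).elim⟩
  choose K hK using hderiv
  refine ⟨4 ^ 2 * ∑ i ∈ Finset.range 4, K i, fun t x => ?_⟩
  have hpow := pow_sum_div_card_le_sum_pow (s := Finset.range 4)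
    (f := fun i => |∂[i] (w t) x|) (fun _ _ => abs_nonneg _) 2
  rw [Finset.card_range, div_le_iff₀ (by norm_num)] at hpow
  calc size w t x ^ 3 ≤ (∑ i ∈ Finset.range 4, |∂[i] (w t) x| ^ 3) * 4 ^ 2 := mod_cast hpow
    _ ≤ (∑ i ∈ Finset.range 4, K i * energy w t) * 4 ^ 2 := by
        gcongr with i hi
        exact hK i hi t x
    _ = 4 ^ 2 * (∑ i ∈ Finset.range 4, K i) * energy w t := by
        rw [← Finset.sum_mul]
        ring

theorem IsLinearizedSolution.eq_zero (h : IsLinearizedSolution γ0 T₁ T₂ w Δ A B C D)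
    (hγ0 : γ0 ≠ 0) (hB : ∀ t ∈ Icc T₁ T₂, 0 ≤ ∫ x in (0 : ℝ)..2 * π, B t x) {M : ℝ}
    (hM : ∀ t x, size w t x ^ 3 ≤ M * energy w t) (h0 : ∀ x, w T₁ x = 0) :
    ∀ t ∈ Icc T₁ T₂, ∀ x, w t x = 0 := by
  obtain ⟨H, hH⟩ := exists_isWeight hγ0 h.spaceC_A h.spaceC_B h.timeC1_A h.timeC1_B
  obtain ⟨H', cH', hH'⟩ := hH.timeC1.exists_hasDerivAt
  obtain ⟨K, hK⟩ := h.exists_integral_energyRate_le hH cH' hB hM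
  have hw : SpaceC 1 w := h.spaceC.mono (by norm_num)
  have hinit : modifiedEnergy H w T₁ = 0 := by
    have hw0 : w T₁ = fun _ => 0 := funext h0
    simp [modifiedEnergy, energyDensity, hw0]
  have hnonpos := nonpos_of_deriv_le_mul
    (continuous_integral_param (continuous_energyDensity hH.spaceC.continuous hw) _ _).continuousOn
    (fun t ht => h.hasDerivAt_modifiedEnergy hH.spaceC.continuous cH' hH' ht)
    (fun t ht => hK t (Ioo_subset_Icc_self ht)) hinit.le
  intro t ht x
  have henergy : energy w t = 0 :=
    le_antisymm ((hH.energy_le_modifiedEnergy hw ht).trans (hnonpos t ht)) (energy_nonneg w t)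
  have hsize : size w t x ^ 3 ≤ 0 := by simpa only [henergy, mul_zero] using hM t x
  have hw0 := abs_iteratedDeriv_le_size w (i := 0) (by norm_num) t x
  rw [iteratedDeriv_zero, pow_eq_zero_iff three_ne_zero |>.1
    (hsize.antisymm (pow_nonneg (size_nonneg w t x) 3))] at hw0
  exact abs_nonpos_iff.1 hw0

end

/-! ### Linearisation of the nonlinearity -/

/-- `f` is the linear part of `F - G` along `l`, up to an error quadratic in the small quantity
`δ`, for bounded `F` and `G` that differ by `O(δ)`. -/
structure IsLinearization {α : Type*} (l : Filter α) (δ F G f : α → ℝ) : Prop where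
  isBigO_left : F =O[l] fun _ => (1 : ℝ)
  isBigO_right : G =O[l] fun _ => (1 : ℝ)
  isBigO_sub : (fun p => F p - G p) =O[l] δ
  isBigO_error : (fun p => F p - G p - f p) =O[l] fun p => δ p ^ 2

namespace IsLinearization

variable {α : Type*} {l : Filter α} {δ F G f F' G' f' : α → ℝ}

lemma const (c : ℝ) : IsLinearization l δ (fun _ => c) (fun _ => c) fun _ => 0 where
  isBigO_left := isBigO_const_const c one_ne_zero l
  isBigO_right := isBigO_const_const c one_ne_zero l
  isBigO_sub := by simpa only [sub_self] using isBigO_zero δ l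
  isBigO_error := by simpa only [sub_self] using isBigO_zero (fun p => δ p ^ 2) l

lemma add (h : IsLinearization l δ F G f) (h' : IsLinearization l δ F' G' f') :
    IsLinearization l δ (fun p => F p + F' p) (fun p => G p + G' p) fun p => f p + f' p where
  isBigO_left := h.isBigO_left.add h'.isBigO_left
  isBigO_right := h.isBigO_right.add h'.isBigO_right
  isBigO_sub := (h.isBigO_sub.add h'.isBigO_sub).congr_left fun p => by ring
  isBigO_error := (h.isBigO_error.add h'.isBigO_error).congr_left fun p => by ring

lemma mul (h : IsLinearization l δ F G f) (h' : IsLinearization l δ F' G' f') :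
    IsLinearization l δ (fun p => F p * F' p) (fun p => G p * G' p)
      fun p => f p * F' p + F p * f' p where
  isBigO_left := (h.isBigO_left.mul h'.isBigO_left).congr_right fun _ => one_mul 1
  isBigO_right := (h.isBigO_right.mul h'.isBigO_right).congr_right fun _ => one_mul 1
  isBigO_sub :=
    (((h.isBigO_sub.mul h'.isBigO_left).congr_right fun p => mul_one (δ p)).add
      ((h.isBigO_right.mul h'.isBigO_sub).congr_right fun p => one_mul (δ p))).congr_left
      fun p => by ring
  isBigO_error := by
    have hleft := (h.isBigO_error.mul h'.isBigO_left).congr_right fun p => mul_one (δ p ^ 2)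
    have hright := (h.isBigO_left.mul h'.isBigO_error).congr_right fun p => one_mul (δ p ^ 2)
    have hcross := (h.isBigO_sub.mul h'.isBigO_sub).congr_right fun p => (sq (δ p)).symm
    exact ((hleft.add hright).sub hcross).congr_left fun p => by ring

lemma pow (h : IsLinearization l δ F G f) (m : ℕ) :
    IsLinearization l δ (fun p => F p ^ m) (fun p => G p ^ m)
      fun p => m * F p ^ (m - 1) * f p := by
  induction m with
  | zero => simpa only [pow_zero, Nat.cast_zero, zero_mul] using const 1
  | succ m ih =>
    convert ih.mul h using 2 with p p p
    · exact pow_succ _ _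
    · exact pow_succ _ _
    · cases m with
      | zero => simp
      | succ m =>
        simp only [Nat.add_sub_cancel]
        push_cast
        ring

lemma sum {ι : Type*} (s : Finset ι) {F G f : ι → α → ℝ}
    (h : ∀ i, IsLinearization l δ (F i) (G i) (f i)) :
    IsLinearization l δ (fun p => ∑ i ∈ s, F i p) (fun p => ∑ i ∈ s, G i p)
      fun p => ∑ i ∈ s, f i p := by
  induction s using Finset.cons_induction with
  | empty => simpa only [Finset.sum_empty] using const 0
  | cons i s hi ih => simpa only [Finset.sum_cons] using (h i).add ih

end IsLinearization

section

variable {γ0 γ1 γ2 T₁ T₂ : ℝ} {j0 : ℕ} {lam : Fin j0 → ℝ} {a b c d : Fin j0 → ℕ}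
  {u v : ℝ → ℝ → ℝ}

lemma SpaceC.iteratedDeriv_sub {n i : ℕ} (hu : SpaceC n u) (hv : SpaceC n v) (hi : i ≤ n)
    (t x : ℝ) : ∂[i] (fun x => u t x - v t x) x = ∂[i] (u t) x - ∂[i] (v t) x :=
  iteratedDeriv_fun_sub ((hu.contDiff t).of_le (mod_cast hi)).contDiffAt
    ((hv.contDiff t).of_le (mod_cast hi)).contDiffAt

lemma isLinearization_iteratedDeriv (hu : SpaceC 3 u) (hv : SpaceC 3 v) {i : ℕ} (hi : i < 4) :
    IsLinearization (𝓟 (slab T₁ T₂)) (fun p => size (fun t x => u t x - v t x) p.1 p.2)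
      (fun p => ∂[i] (u p.1) p.2) (fun p => ∂[i] (v p.1) p.2)
      fun p => ∂[i] (fun x => u p.1 x - v p.1 x) p.2 where
  isBigO_left := isBigO_one_of_continuous (hu.continuous_iteratedDeriv (by omega))
  isBigO_right := isBigO_one_of_continuous (hv.continuous_iteratedDeriv (by omega))
  isBigO_sub := .of_bound' <| .of_forall fun p => by
    rw [← hu.iteratedDeriv_sub hv (by omega)]
    exact (abs_iteratedDeriv_le_size (fun t x => u t x - v t x) hi p.1 p.2).trans
      (le_abs_self _)
  isBigO_error := (isBigO_zero _ _).congr_left fun p => by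
    rw [hu.iteratedDeriv_sub hv (by omega), sub_self]

lemma isLinearization_nfun (hu : SpaceC 3 u) (hv : SpaceC 3 v) (lam : Fin j0 → ℝ)
    (a b c d : Fin j0 → ℕ) :
    IsLinearization (𝓟 (slab T₁ T₂)) (fun p => size (fun t x => u t x - v t x) p.1 p.2)
      (fun p => Nfun j0 lam a b c d (u p.1) p.2) (fun p => Nfun j0 lam a b c d (v p.1) p.2)
      fun p =>
        Nfun j0 (fun j => lam j * a j) (a - 1) b c d (u p.1) p.2 *
            ∂[3] (fun x => u p.1 x - v p.1 x) p.2 +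
          Nfun j0 (fun j => lam j * b j) a (b - 1) c d (u p.1) p.2 *
            ∂[2] (fun x => u p.1 x - v p.1 x) p.2 +
          Nfun j0 (fun j => lam j * c j) a b (c - 1) d (u p.1) p.2 *
            ∂[1] (fun x => u p.1 x - v p.1 x) p.2 +
          Nfun j0 (fun j => lam j * d j) a b c (d - 1) (u p.1) p.2 * (u p.1 p.2 - v p.1 p.2) := by
  have hderiv {i : ℕ} (hi : i < 4 := by norm_num) :=
    isLinearization_iteratedDeriv (T₁ := T₁) (T₂ := T₂) hu hv hi
  convert IsLinearization.sum Finset.univ fun j : Fin j0 =>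
    ((((IsLinearization.const (lam j)).mul ((hderiv (i := 3)).pow (a j))).mul
      ((hderiv (i := 2)).pow (b j))).mul ((hderiv (i := 1)).pow (c j))).mul
      ((hderiv (i := 0)).pow (d j)) using 2 with p p p
  · simp only [Nfun, iteratedDeriv_one, iteratedDeriv_zero]
  · simp only [Nfun, iteratedDeriv_one, iteratedDeriv_zero]
  · simp only [Nfun, ← iteratedDeriv_one, iteratedDeriv_zero, Finset.sum_mul]
    simp only [← Finset.sum_add_distrib]
    refine Finset.sum_congr rfl fun j _ => ?_
    simp only [Pi.sub_apply, Pi.one_apply]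
    ring

lemma isLinearizedSolution_sub (hu : SpaceC 8 u) (hv : SpaceC 6 v)
    (tu : IsTimePrimitive T₁ T₂ u fun t => vectorField γ0 γ1 γ2 j0 lam a b c d (u t))
    (tv : IsTimePrimitive T₁ T₂ v fun t => vectorField γ0 γ1 γ2 j0 lam a b c d (v t)) :
    IsLinearizedSolution γ0 T₁ T₂ (fun t x => u t x - v t x)
      (fun t x => Nfun j0 lam a b c d (u t) x - Nfun j0 lam a b c d (v t) x -
        γ1 * ∂[3] (fun x => u t x - v t x) x - γ2 * ∂[1] (fun x => u t x - v t x) x)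
      (fun t x => Nfun j0 (fun j => lam j * a j) (a - 1) b c d (u t) x - γ1)
      (fun t => Nfun j0 (fun j => lam j * b j) a (b - 1) c d (u t))
      (fun t x => Nfun j0 (fun j => lam j * c j) a b (c - 1) d (u t) x - γ2)
      (fun t => Nfun j0 (fun j => lam j * d j) a b c (d - 1) (u t)) := by
  have hu6 : SpaceC 6 u := hu.mono (by norm_num)
  have hw : SpaceC 6 fun t x => u t x - v t x := hu6.sub hv
  have hconst {n : ℕ} (γ : ℝ) : SpaceC n fun _ _ => γ := SpaceC.of_time continuous_const
  have hN {n : ℕ} (lam : Fin j0 → ℝ) (a b c d : Fin j0 → ℕ) (hn : n + 3 ≤ 8 := by norm_num) :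
      SpaceC n fun t x => Nfun j0 lam a b c d (u t) x := SpaceC.nfun (hu.mono hn) lam a b c d
  have hvu : SpaceC 3 fun t => vectorField γ0 γ1 γ2 j0 lam a b c d (u t) := hu.vectorField
  have hvv : SpaceC 1 fun t => vectorField γ0 γ1 γ2 j0 lam a b c d (v t) := hv.vectorField
  have tN := TimeC1.nfun (I := Ioo T₁ T₂) (u := u) (j0 := j0) fun i hi =>
    (tu.iteratedDeriv (hu.mono (by norm_num)) hvu hi).timeC1
      (hu.continuous_iteratedDeriv (by omega)) (hvu.continuous_iteratedDeriv hi)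
  refine ⟨hw, ?_, (hN _ _ _ _ _).sub (hconst γ1), hN _ _ _ _ _, (hN _ _ _ _ _).sub (hconst γ2),
    hN _ _ _ _ _, (tN _ _ _ _ _).sub (TimeC1.of_space continuous_const), tN _ _ _ _ _, ?_, ?_⟩
  · exact (((hN lam a b c d).sub (SpaceC.nfun (hv.mono (by norm_num)) lam a b c d)).sub
      ((hw.iteratedDeriv (i := 3) (by norm_num)).const_mul γ1)).sub
      ((hw.iteratedDeriv (i := 1) (by norm_num)).const_mul γ2)
  · convert tu.sub tv hvu.continuous hvv.continuous using 3 with t x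
    simp only [vectorField, hu6.iteratedDeriv_sub hv (i := 5) (by norm_num),
      hu6.iteratedDeriv_sub hv (i := 3) (by norm_num),
      hu6.iteratedDeriv_sub hv (i := 1) (by norm_num)]
    ring
  · refine (isLinearization_nfun (hu.mono (by norm_num)) (hv.mono (by norm_num)) lam a b c
      d).isBigO_error.congr_left fun p => ?_
    simp only [uncurry_def, linearizationError]
    ring

lemma integral_nfun_eq_two_pi_mul_PN (hu : SpaceC 3 u) (lam : Fin j0 → ℝ) (a b c d : Fin j0 → ℕ)
    (t : ℝ) : ∫ x in (0 : ℝ)..2 * π, Nfun j0 (fun j => lam j * b j) a (b - 1) c d (u t) x =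
      2 * π * PN j0 lam a b c d (u t) := by
  have h3 : Continuous (∂[3] (u t)) := (hu.continuous_iteratedDeriv le_rfl).along_snd
  have h2 : Continuous (∂[2] (u t)) := (hu.continuous_iteratedDeriv (by norm_num)).along_snd
  have h1 : Continuous (∂[1] (u t)) := (hu.continuous_iteratedDeriv (by norm_num)).along_snd
  have h0 : Continuous (u t) := hu.continuous.along_snd
  simp only [Nfun, PN, ← iteratedDeriv_one]
  rw [intervalIntegral.integral_finsetSum fun j _ =>
    Continuous.intervalIntegrable (by fun_prop) _ _, Finset.mul_sum]
  refine Finset.sum_congr rfl fun j _ => ?_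
  rw [← mul_assoc, mul_div_cancel₀ _ two_pi_pos.ne', ← intervalIntegral.integral_const_mul]
  simp only [Pi.sub_apply, Pi.one_apply, mul_assoc]

theorem eq_of_isTimePrimitive {s : ℕ} {M N : ℝ} (hs : 11 ≤ s) (hγ0 : γ0 ≠ 0)
    (hu : SobolevPath s M u) (hv : SobolevPath s N v)
    (tu : IsTimePrimitive T₁ T₂ u fun t => vectorField γ0 γ1 γ2 j0 lam a b c d (u t))
    (tv : IsTimePrimitive T₁ T₂ v fun t => vectorField γ0 γ1 γ2 j0 lam a b c d (v t))
    (hinit : u T₁ = v T₁) (hP : ∀ t ∈ Icc T₁ T₂, 0 ≤ PN j0 lam a b c d (u t)) :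
    ∀ t ∈ Icc T₁ T₂, ∀ x, u t x = v t x := by
  have ru : SpaceC 8 u := hu.spaceC (by omega)
  obtain ⟨K, hK⟩ := (hu.sub hv).exists_size_cube_le hs
  have hzero := (isLinearizedSolution_sub ru (hv.spaceC (by omega)) tu tv).eq_zero hγ0
    (fun t ht => ?_) hK fun x => by rw [hinit, sub_self]
  · exact fun t ht x => sub_eq_zero.1 (hzero t ht x)
  · rw [integral_nfun_eq_two_pi_mul_PN (ru.mono (by norm_num))]
    exact mul_nonneg two_pi_pos.le (hP t ht)

theorem lwp_parabolic_uniqueness_general {s : ℕ} (hs : 11 ≤ s) (hγ0 : γ0 ≠ 0) (hT : T₁ < T₂)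
    (hsol₁ : IsSolution γ0 γ1 γ2 j0 lam a b c d T₁ T₂ u)
    (hsol₂ : IsSolution γ0 γ1 γ2 j0 lam a b c d T₁ T₂ v)
    (hmem₁ : ∀ t ∈ Icc T₁ T₂, MemHs s (u t)) (hmem₂ : ∀ t ∈ Icc T₁ T₂, MemHs s (v t))
    (hbdd₁ : ∃ M, ∀ t ∈ Icc T₁ T₂, hsNorm s (u t) ≤ M)
    (hbdd₂ : ∃ M, ∀ t ∈ Icc T₁ T₂, hsNorm s (v t) ≤ M)
    (hcont₁ : ContInHs 0 (Icc T₁ T₂) u) (hcont₂ : ContInHs 0 (Icc T₁ T₂) v)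
    (hinit : u T₁ = v T₁) (hPNpos : ∀ t ∈ Icc T₁ T₂, 0 ≤ PN j0 lam a b c d (u t)) :
    ∀ t ∈ Icc T₁ T₂, ∀ x, u t x = v t x := by
  obtain ⟨M, hM⟩ := hbdd₁
  obtain ⟨N, hN⟩ := hbdd₂
  have hu := SobolevPath.of_memHs hT.le hmem₁ hM hcont₁
  have hv := SobolevPath.of_memHs hT.le hmem₂ hN hcont₂
  have hext (f : ℝ → ℝ → ℝ) {t : ℝ} (ht : t ∈ Icc T₁ T₂) :
      IccExtend hT.le (fun t => f t) t = f t := IccExtend_of_mem hT.le _ ht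
  have tu := (hsol₁.congr hT.le fun t ht => (hext u ht).symm).isTimePrimitive hT
    (hu.spaceC (by omega))
  have tv := (hsol₂.congr hT.le fun t ht => (hext v ht).symm).isTimePrimitive hT
    (hv.spaceC (by omega))
  have hT₁ : T₁ ∈ Icc T₁ T₂ := left_mem_Icc.2 hT.le
  have heq := eq_of_isTimePrimitive hs hγ0 hu hv tu tv (by rw [hext u hT₁, hext v hT₁, hinit])
    fun t ht => by simpa only [hext u ht] using hPNpos t ht
  intro t ht x
  simpa only [hext u ht, hext v ht] using heq t ht x

end

end

/-- **Uniqueness for parabolic resonance type, positive case.**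
If `u₁, u₂ ∈ C([0,T];L²) ∩ L^∞([0,T];H^{12})` are solutions with the same initial datum
`φ ∈ H^{12}(𝕋)` and `P_N(u₁(t)) ≥ 0` on `[0,T]`, then `u₁ = u₂` on `[0,T]`. -/
theorem lwp_parabolic_uniqueness
    (γ0 γ1 γ2 : ℝ) (hγ0 : γ0 ≠ 0)
    (j0 : ℕ) (lam : Fin j0 → ℝ) (a b c d : Fin j0 → ℕ)
    (hp : ∀ j : Fin j0, 2 ≤ a j + b j + c j + d j)
    (T : ℝ) (hT : 0 < T) (φ : ℝ → ℝ) (hφ : MemHs 12 φ)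
    (u₁ u₂ : ℝ → ℝ → ℝ)
    (hsol₁ : IsSolution γ0 γ1 γ2 j0 lam a b c d 0 T u₁)
    (hsol₂ : IsSolution γ0 γ1 γ2 j0 lam a b c d 0 T u₂)
    (hmem₁ : ∀ t ∈ Set.Icc (0:ℝ) T, MemHs 12 (u₁ t))
    (hmem₂ : ∀ t ∈ Set.Icc (0:ℝ) T, MemHs 12 (u₂ t))
    (hbdd₁ : ∃ M : ℝ, ∀ t ∈ Set.Icc (0:ℝ) T, hsNorm 12 (u₁ t) ≤ M)
    (hbdd₂ : ∃ M : ℝ, ∀ t ∈ Set.Icc (0:ℝ) T, hsNorm 12 (u₂ t) ≤ M)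
    (hcont₁ : ContInHs 0 (Set.Icc (0:ℝ) T) u₁)
    (hcont₂ : ContInHs 0 (Set.Icc (0:ℝ) T) u₂)
    (hinit₁ : u₁ 0 = φ) (hinit₂ : u₂ 0 = φ)
    (hPNpos : ∀ t ∈ Set.Icc (0:ℝ) T, 0 ≤ PN j0 lam a b c d (u₁ t)) :
    ∀ t ∈ Set.Icc (0:ℝ) T, ∀ x : ℝ, u₁ t x = u₂ t x :=
  lwp_parabolic_uniqueness_general (by norm_num : 11 ≤ 12) hγ0 hT hsol₁ hsol₂ hmem₁ hmem₂
    hbdd₁ hbdd₂ hcont₁ hcont₂ (hinit₁.trans hinit₂.symm) hPNpos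

end FifthOrderStmt3
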